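/- arXiv:1007.0912 — 4 statements merged into one kernel-verified Lean document; each statement's English description precedes it below -/
import Mathlib

section
/- For any real numbers ω₁, …, ω_l there exists a C^∞ function U = U(ρ, ζ) defined on a neighborhood of 0 in ℝ^{1+l} such that Φ(ρ,ζ)·∂U/∂ρ + Ψ₁(ρ,ζ)·∂U/∂ζ₁ + ⋯ + Ψ_l(ρ,ζ)·∂U/∂ζ_l = 0 identically near 0, with ∂U/∂ρ(0,0) = ω₁ and ∂U/∂ζ_i(0,0) = ω_i for i = 2, …, l. Moreover, for any such U the function (ξ, η, ζ) ↦ U(ξ^m η^n, ζ) is a first integral of the vector field V, i.e., its derivative along V vanishes identically in a neighborhood of 0 in ℝ^{2+l}. -/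
open Filter Topology

section FirstIntegral

open scoped ContDiff unitInterval

universe u

namespace ContinuousMap

/-- Pointwise application of a continuous family of operators, as a bounded bilinear map. -/
noncomputable def pointwiseApply (K E F : Type*) [TopologicalSpace K] [CompactSpace K]
    [NormedAddCommGroup E] [NormedSpace ℝ E] [NormedAddCommGroup F] [NormedSpace ℝ F] :
    C(K, E →L[ℝ] F) →L[ℝ] C(K, E) →L[ℝ] C(K, F) :=
  LinearMap.mkContinuous₂
    (LinearMap.mk₂ ℝ
      (fun (M : C(K, E →L[ℝ] F)) (h : C(K, E)) => (⟨fun t => M t (h t), by fun_prop⟩ : C(K, F)))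
      (fun _ _ _ => by ext; simp) (fun _ _ _ => by ext; simp)
      (fun _ _ _ => by ext; simp) (fun _ _ _ => by ext; simp)) 1 fun M h => by
    rw [one_mul]
    refine (norm_le _ (by positivity)).2 fun t => ((M t).le_opNorm (h t)).trans ?_
    gcongr
    · exact M.norm_coe_le_norm t
    · exact h.norm_coe_le_norm t

section Postcomp

variable {K : Type*} [TopologicalSpace K] [CompactSpace K]

theorem hasFDerivAt_postcomp {E F : Type*} [NormedAddCommGroup E] [NormedSpace ℝ E]
    [NormedAddCommGroup F] [NormedSpace ℝ F] {X : E → F} {X' : E → E →L[ℝ] F}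
    (hX : Continuous X) (hX' : Continuous X') (h : ∀ x, HasFDerivAt X (X' x) x) (α : C(K, E)) :
    HasFDerivAt (fun β : C(K, E) => (⟨X, hX⟩ : C(E, F)).comp β)
      (pointwiseApply K E F ((⟨X', hX'⟩ : C(E, E →L[ℝ] F)).comp α)) α := by
  rw [hasFDerivAt_iff_isLittleO, Asymptotics.isLittleO_iff]
  intro ε hε
  have hcont : Continuous fun β : C(K, E) => (⟨X', hX'⟩ : C(E, E →L[ℝ] F)).comp β :=
    continuous_postcomp _
  have hnhds := hcont.continuousAt.preimage_mem_nhds (x := α)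
    (Metric.ball_mem_nhds ((⟨X', hX'⟩ : C(E, E →L[ℝ] F)).comp α) hε)
  obtain ⟨δ, hδ, hball⟩ := Metric.mem_nhds_iff.1 hnhds
  filter_upwards [Metric.ball_mem_nhds α hδ] with β hβ
  refine (norm_le _ (by positivity)).2 fun t => ?_
  have key := Convex.norm_image_sub_le_of_norm_hasFDerivWithin_le' (f := X) (f' := X')
    (φ := X' (α t)) (C := ε) (s := segment ℝ (α t) (β t)) (x := α t) (y := β t)
    (fun x _ => (h x).hasFDerivWithinAt) ?_ (convex_segment _ _)
    (left_mem_segment ..) (right_mem_segment ..)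
  · refine key.trans ?_
    gcongr
    exact (β - α).norm_coe_le_norm t
  · rintro x ⟨a, b, ha, hb, hab, rfl⟩
    have hmem : a • α + b • β ∈ Metric.ball α δ :=
      (convex_ball α δ) (Metric.mem_ball_self hδ) hβ ha hb hab
    have := dist_apply_le_dist (f := (⟨X', hX'⟩ : C(E, E →L[ℝ] F)).comp (a • α + b • β))
      (g := (⟨X', hX'⟩ : C(E, E →L[ℝ] F)).comp α) t
    rw [dist_eq_norm] at this
    exact this.trans (Metric.mem_ball.1 (hball hmem)).le

theorem contDiff_nat_postcomp {E : Type u} [NormedAddCommGroup E] [NormedSpace ℝ E] (n : ℕ) :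
    ∀ {F : Type u} [NormedAddCommGroup F] [NormedSpace ℝ F] {X : E → F} (hX : ContDiff ℝ n X),
      ContDiff ℝ n (fun β : C(K, E) => (⟨X, hX.continuous⟩ : C(E, F)).comp β) := by
  induction n with
  | zero =>
    intro F _ _ X hX
    exact contDiff_zero.2 (continuous_postcomp _)
  | succ n ih =>
    intro F _ _ X hX
    have hX1 : ContDiff ℝ ((n : WithTop ℕ∞) + 1) X := by exact_mod_cast hX
    obtain ⟨X', hX', h⟩ := contDiff_succ_iff_hasFDerivAt.1 hX1
    have : ContDiff ℝ ((n : WithTop ℕ∞) + 1)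
        (fun β : C(K, E) => (⟨X, hX.continuous⟩ : C(E, F)).comp β) :=
      contDiff_succ_iff_hasFDerivAt.2 ⟨_,
        (pointwiseApply K E F).contDiff.comp (ih hX'),
        hasFDerivAt_postcomp hX.continuous hX'.continuous h⟩
    exact_mod_cast this

/-- Post-composition with a smooth map is a smooth map between spaces of continuous maps. -/
theorem contDiff_postcomp {E F : Type u} [NormedAddCommGroup E] [NormedSpace ℝ E]
    [NormedAddCommGroup F] [NormedSpace ℝ F] {X : E → F} (hX : ContDiff ℝ ∞ X) :
    ContDiff ℝ ∞ (fun β : C(K, E) => (⟨X, hX.continuous⟩ : C(E, F)).comp β) :=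
  contDiff_infty.2 fun n => contDiff_nat_postcomp n (contDiff_infty.1 hX n)

/-- The embedding of `E` into `C(K, E)` as constant maps. -/
def constCLM (K E : Type*) [TopologicalSpace K] [CompactSpace K]
    [NormedAddCommGroup E] [NormedSpace ℝ E] : E →L[ℝ] C(K, E) where
  toFun := const K
  map_add' _ _ := rfl
  map_smul' _ _ := rfl
  cont := continuous_const'

end Postcomp

/-- The Volterra operator `α ↦ (t ↦ ∫ τ in 0..t, α τ)` on continuous maps of the unit interval. -/
noncomputable def volterra (E : Type*) [NormedAddCommGroup E] [NormedSpace ℝ E] :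
    C(I, E) →L[ℝ] C(I, E) :=
  LinearMap.mkContinuous
    { toFun := fun α => ⟨fun t => ∫ τ in (0 : ℝ)..t, α (Set.projIcc 0 1 zero_le_one τ),
        (intervalIntegral.continuous_primitive
          (fun _ _ => (α.continuous.comp continuous_projIcc).intervalIntegrable _ _) 0).comp
          continuous_subtype_val⟩
      map_add' := fun α β => by
        ext t
        exact intervalIntegral.integral_add
          ((α.continuous.comp continuous_projIcc).intervalIntegrable _ _)
          ((β.continuous.comp continuous_projIcc).intervalIntegrable _ _)
      map_smul' := fun c α => by
        ext t
        exact intervalIntegral.integral_smul _ _ } 1 fun α => by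
    rw [one_mul]
    refine (norm_le _ (norm_nonneg _)).2 fun t => ?_
    refine (intervalIntegral.norm_integral_le_of_norm_le_const
      fun τ _ => α.norm_coe_le_norm _).trans ?_
    rw [sub_zero, abs_of_nonneg t.2.1]
    exact mul_le_of_le_one_right (norm_nonneg _) t.2.2

theorem volterra_apply {E : Type*} [NormedAddCommGroup E] [NormedSpace ℝ E] (α : C(I, E)) (t : I) :
    volterra E α t = ∫ τ in (0 : ℝ)..t, α (Set.projIcc 0 1 zero_le_one τ) :=
  rfl

end ContinuousMap

open ContinuousMap

/-- If `α` is a curve with velocity `-c • Y ∘ α` starting at `p`, then `δ t = (1 - t) • Y (α t)`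
has velocity `-Y ∘ α - c • DY(α) δ` and initial value `Y p`; both are stated in integral form. -/
theorem volterra_linearised_eq {E : Type*} [NormedAddCommGroup E] [NormedSpace ℝ E]
    [CompleteSpace E] {Y : E → E} {Y' : E → E →L[ℝ] E} (hY : Continuous Y) (hY' : Continuous Y')
    (h : ∀ x, HasFDerivAt Y (Y' x) x) {p : E} {c : ℝ} {α : C(I, E)}
    (hα : ∀ t, α t = p - c • volterra E ((⟨Y, hY⟩ : C(E, E)).comp α) t) (t : I) :
    (1 - (t : ℝ)) • Y (α t) - Y p + volterra E ((⟨Y, hY⟩ : C(E, E)).comp α) t +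
      c • volterra E (pointwiseApply I E E ((⟨Y', hY'⟩ : C(E, E →L[ℝ] E)).comp α)
        (⟨fun t => (1 - (t : ℝ)) • Y (α t), by fun_prop⟩ : C(I, E))) t = 0 := by
  set a : ℝ → E := fun τ => α (Set.projIcc 0 1 zero_le_one τ) with ha
  have hac : Continuous a := α.continuous.comp continuous_projIcc
  set A : ℝ → E := fun s => p - c • ∫ τ in (0 : ℝ)..s, Y (a τ) with hA
  have hAa : ∀ s ∈ Set.Icc (0 : ℝ) 1, A s = a s := fun s hs => by
    have := hα ⟨s, hs⟩
    rw [volterra_apply] at this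
    simp only [ha, Set.projIcc_of_mem zero_le_one hs]
    exact this.symm
  have hAd : ∀ s, HasDerivAt A (-(c • Y (a s))) s := fun s => by
    have := ((hY.comp hac).integral_hasStrictDerivAt 0 s).hasDerivAt
    simpa using (this.const_smul c).const_sub p
  have hderiv : ∀ s ∈ Set.uIcc (0 : ℝ) t, HasDerivAt (fun s => -((1 - s) • Y (A s)))
      (Y (a s) + c • Y' (a s) ((1 - Set.projIcc 0 1 zero_le_one s : ℝ) • Y (a s))) s := by
    intro s hs
    rw [Set.uIcc_of_le t.2.1] at hs
    have hs' : s ∈ Set.Icc (0 : ℝ) 1 := ⟨hs.1, hs.2.trans t.2.2⟩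
    have h1 := ((h (A s)).comp_hasDerivAt s (hAd s))
    have h2 := (((hasDerivAt_id s).const_sub 1).smul h1).neg
    rw [hAa s hs'] at h2
    refine h2.congr_deriv ?_
    rw [Function.comp_apply, Set.projIcc_of_mem zero_le_one hs', hAa s hs']
    simp [smul_comm c, add_comm]
  have hcont : Continuous fun s =>
      c • Y' (a s) ((1 - Set.projIcc 0 1 zero_le_one s : ℝ) • Y (a s)) := by
    have : Continuous fun s : ℝ => (Set.projIcc 0 1 zero_le_one s : ℝ) :=
      continuous_subtype_val.comp continuous_projIcc
    fun_prop
  have hYa : Continuous fun s => Y (a s) := hY.comp hac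
  have hint := intervalIntegral.integral_eq_sub_of_hasDerivAt hderiv
    ((hYa.add hcont).intervalIntegrable _ _)
  rw [intervalIntegral.integral_add (hYa.intervalIntegrable _ _)
    (hcont.intervalIntegrable _ _), intervalIntegral.integral_smul, hAa t t.2,
    hAa 0 (by simp)] at hint
  have ha0 : a 0 = p := by rw [← hAa 0 (by simp)]; simp [hA]
  have hat : a t = α t := by simp [ha]
  rw [ha0, hat] at hint
  rw [volterra_apply, volterra_apply, add_assoc]
  refine (congrArg (_ + ·) hint).trans ?_
  simp

/-- A smooth vector field `Y` has, near `0`, a smooth `E`-valued map `g` that is constant along `Y`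
at every point where `ℓ Y = 1` and whose derivative at `0` is the identity on `ker ℓ`. -/
theorem exists_contDiffOn_fderiv_apply_eq_zero {E : Type u} [NormedAddCommGroup E]
    [NormedSpace ℝ E] [CompleteSpace E] {Y : E → E} (hY : ContDiff ℝ ∞ Y) (ℓ : E →L[ℝ] ℝ) :
    ∃ (N : Set E) (g : E → E), IsOpen N ∧ 0 ∈ N ∧ ContDiffOn ℝ ∞ g N ∧
      (∀ p ∈ N, ℓ (Y p) = 1 → fderiv ℝ g p (Y p) = 0) ∧
      ∀ v, ℓ v = 0 → fderiv ℝ g 0 v = v := by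
  have hY' : Continuous (fderiv ℝ Y) := hY.continuous_fderiv (by simp)
  have hYd : ∀ x, HasFDerivAt Y (fderiv ℝ Y x) x := fun x =>
    (hY.differentiable (by simp) x).hasFDerivAt
  set nem : C(I, E) → C(I, E) := fun α => (⟨Y, hY.continuous⟩ : C(E, E)).comp α
  have hnemC : ContDiff ℝ ∞ nem := contDiff_postcomp hY
  set G : E × C(I, E) → E × C(I, E) := fun q =>
    (q.1, q.2 - constCLM I E q.1 + ℓ q.1 • volterra E (nem q.2)) with hG
  have hGC : ContDiff ℝ ∞ G := by fun_prop
  set D : C(I, E) → C(I, E) →L[ℝ] C(I, E) := fun α =>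
    pointwiseApply I E E ((⟨fderiv ℝ Y, hY'⟩ : C(E, E →L[ℝ] E)).comp α)
  have hGapply : ∀ p α v h, fderiv ℝ G (p, α) (v, h) =
      (v, h - constCLM I E v + (ℓ p • volterra E (D α h) + ℓ v • volterra E (nem α))) := by
    intro p α v h
    have h1 : HasFDerivAt (fun q : E × C(I, E) => volterra E (nem q.2))
        ((volterra E ∘L D α) ∘L ContinuousLinearMap.snd ℝ E C(I, E)) (p, α) :=
      HasFDerivAt.comp (p, α) (g := fun β => volterra E (nem β))
        ((volterra E).hasFDerivAt.comp α (hasFDerivAt_postcomp hY.continuous hY' hYd α))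
        hasFDerivAt_snd
    have h2 : HasFDerivAt (fun q : E × C(I, E) => ℓ q.1)
        (ℓ ∘L ContinuousLinearMap.fst ℝ E C(I, E)) (p, α) :=
      ℓ.hasFDerivAt.comp (p, α) hasFDerivAt_fst
    have h3 : HasFDerivAt (fun q : E × C(I, E) => constCLM I E q.1)
        (constCLM I E ∘L ContinuousLinearMap.fst ℝ E C(I, E)) (p, α) :=
      (constCLM I E).hasFDerivAt.comp (p, α) hasFDerivAt_fst
    have h4 : HasFDerivAt G _ (p, α) :=
      hasFDerivAt_fst.prodMk ((hasFDerivAt_snd.sub h3).add (h2.smul h1))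
    rw [h4.fderiv]
    simp
  let e : (E × C(I, E)) ≃L[ℝ] (E × C(I, E)) :=
    (ContinuousLinearEquiv.refl ℝ E).skewProd (ContinuousLinearEquiv.refl ℝ C(I, E))
      (ℓ.smulRight (volterra E (nem 0)) - constCLM I E)
  have he : fderiv ℝ G 0 = e := by
    refine ContinuousLinearMap.ext fun ⟨v, h⟩ => ?_
    rw [show (0 : E × C(I, E)) = (0, 0) from rfl, hGapply]
    simp [e]
    abel
  have hG0 : HasFDerivAt G (e : (E × C(I, E)) →L[ℝ] (E × C(I, E))) 0 :=
    he ▸ (hGC.differentiable (by simp) 0).hasFDerivAt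
  let T := hGC.contDiffAt.toOpenPartialHomeomorph G hG0 (by simp)
  have hT : ⇑T = G := rfl
  have hG00 : G 0 = 0 := by simp [hG]
  have hT0s : 0 ∈ T.source := hGC.contDiffAt.mem_toOpenPartialHomeomorph_source hG0 (by simp)
  have hT0 : T.symm 0 = 0 := by
    have := T.left_inv hT0s
    rwa [hT, hG00] at this
  have hT0t : 0 ∈ T.target := by simpa [hT, hG00] using T.map_source hT0s
  have hev : ∀ᶠ y in 𝓝 (0 : E × C(I, E)), y ∈ T.target ∧
      fderiv ℝ G (T.symm y) ∈
        Set.range ((↑) : ((E × C(I, E)) ≃L[ℝ] (E × C(I, E))) → _ →L[ℝ] _) := by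
    refine Filter.Eventually.and (T.open_target.mem_nhds hT0t) ?_
    have h1 : Tendsto (fun y => fderiv ℝ G (T.symm y)) (𝓝 0) (𝓝 (e : _ →L[ℝ] _)) := by
      have := ((hGC.continuous_fderiv (by simp)).continuousAt (x := T.symm 0)).comp
        (T.continuousAt_symm hT0t)
      rw [ContinuousAt] at this
      simpa [hT0, he, Function.comp_def] using this
    exact h1 e.nhds
  have hemb : Continuous fun p : E => ((p, 0) : E × C(I, E)) := by fun_prop
  obtain ⟨N, hNsub, hNo, hN0⟩ := mem_nhds_iff.1
    ((hemb.tendsto' 0 0 rfl).eventually hev)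
  have hWC : ∀ p ∈ N, ContDiffAt ℝ ∞ (fun p : E => T.symm (p, 0)) p := by
    intro p hp
    obtain ⟨ht, e', he'⟩ := hNsub hp
    have : ContDiffAt ℝ ∞ T.symm (p, 0) := T.contDiffAt_symm ht (f₀' := e')
      (he' ▸ (hGC.differentiable (by simp) _).hasFDerivAt) hGC.contDiffAt
    exact this.comp p (f := fun p : E => ((p, 0) : E × C(I, E))) (by fun_prop)
  have hGW : ∀ p ∈ N, G (T.symm (p, 0)) = (p, 0) := fun p hp => T.right_inv (hNsub hp).1
  have hWd : ∀ p ∈ N, ∀ v, fderiv ℝ G (T.symm (p, 0))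
      (fderiv ℝ (fun p : E => T.symm (p, 0)) p v) = (v, 0) := by
    intro p hp v
    have h1 := ((hWC p hp).differentiableAt (by simp)).hasFDerivAt
    have h2 := ((hGC.differentiable (by simp) (T.symm (p, 0))).hasFDerivAt).comp p h1
    have h3 : HasFDerivAt (fun p : E => ((p, 0) : E × C(I, E)))
        (ContinuousLinearMap.inl ℝ E C(I, E)) p := hasFDerivAt_prodMk_left p 0
    have h4 := h2.congr_of_eventuallyEq
      (f₁ := fun p : E => ((p, 0) : E × C(I, E)))
      (by filter_upwards [hNo.mem_nhds hp] with q hq using (hGW q hq).symm)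
    simpa using (DFunLike.congr_fun (h4.unique h3) v)
  have hWinj : ∀ p ∈ N, Function.Injective (fderiv ℝ G (T.symm (p, 0))) := by
    intro p hp
    obtain ⟨-, e', he'⟩ := hNsub hp
    rw [← he']
    exact e'.injective
  let ev : E × C(I, E) →L[ℝ] E := evalCLM ℝ (1 : I) ∘L ContinuousLinearMap.snd ℝ E C(I, E)
  have hg : ∀ p ∈ N, ∀ v, fderiv ℝ (fun p : E => ev (T.symm (p, 0))) p v =
      ev (fderiv ℝ (fun p : E => T.symm (p, 0)) p v) := by
    intro p hp v
    have h1 := ((hWC p hp).differentiableAt (by simp)).hasFDerivAt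
    exact DFunLike.congr_fun (ev.hasFDerivAt.comp p h1).fderiv v
  refine ⟨N, fun p => ev (T.symm (p, 0)), hNo, hN0, fun p hp =>
    (ev.contDiff.contDiffAt.comp p (hWC p hp)).contDiffWithinAt, ?_, ?_⟩
  · intro p hp hℓ
    rw [hg p hp]
    obtain ⟨q, α, hq⟩ : ∃ q α, T.symm (p, 0) = (q, α) := ⟨_, _, rfl⟩
    have hGq := hGW p hp
    rw [hq] at hGq
    obtain rfl : q = p := congrArg Prod.fst hGq
    have hα : ∀ t, α t = q - ℓ q • volterra E (nem α) t := fun t => by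
      have := DFunLike.congr_fun (congrArg Prod.snd hGq) t
      have : α t - q + ℓ q • volterra E (nem α) t = 0 := this
      rw [← sub_eq_zero, ← this]
      abel
    have hlin := volterra_linearised_eq hY.continuous hY' hYd hα
    have key : fderiv ℝ (fun p : E => T.symm (p, 0)) q (Y q) =
        (Y q, ⟨fun t => (1 - (t : ℝ)) • Y (α t), by fun_prop⟩) := by
      apply hWinj q hp
      rw [hWd q hp, hq, hGapply, hℓ]
      refine Prod.ext rfl (ContinuousMap.ext fun t => ?_)
      refine Eq.trans (hlin t).symm ?_
      simp only [ContinuousMap.add_apply, ContinuousMap.sub_apply, ContinuousMap.smul_apply,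
        one_smul]
      rw [add_assoc, add_comm (volterra E _ t)]
      rfl
    rw [key]
    simp [ev]
  · intro v hv
    rw [hg 0 hN0]
    have key : fderiv ℝ (fun p : E => T.symm (p, 0)) 0 v = (v, constCLM I E v) := by
      apply hWinj 0 hN0
      rw [hWd 0 hN0, show ((0, 0) : E × C(I, E)) = 0 from rfl, hT0,
        show (0 : E × C(I, E)) = (0, 0) from rfl, hGapply, hv]
      simp
    rw [key]
    rfl

/-- A map that is smooth on a neighbourhood of `x` agrees near `x` with a globally smooth map. -/
theorem ContDiffOn.exists_contDiff_eventuallyEq {E F : Type*} [NormedAddCommGroup E]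
    [NormedSpace ℝ E] [FiniteDimensional ℝ E] [NormedAddCommGroup F] [NormedSpace ℝ F]
    {X : E → F} {s : Set E} {x : E} (hs : IsOpen s) (hx : x ∈ s) (hX : ContDiffOn ℝ ∞ X s) :
    ∃ Y : E → F, ContDiff ℝ ∞ Y ∧ Y =ᶠ[𝓝 x] X := by
  obtain ⟨r, hr, hrs⟩ := Metric.nhds_basis_closedBall.mem_iff.1 (hs.mem_nhds hx)
  let b : ContDiffBump x := ⟨r / 2, r, by positivity, by linarith⟩
  refine ⟨fun y => b y • X y, contDiff_iff_contDiffAt.2 fun y => ?_, ?_⟩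
  · by_cases hy : y ∈ s
    · exact b.contDiffAt.smul (hX.contDiffAt (hs.mem_nhds hy))
    · have hy' : y ∉ tsupport b := fun h => hy (hrs (b.tsupport_eq ▸ h))
      refine (contDiffAt_const (c := (0 : F))).congr_of_eventuallyEq ?_
      filter_upwards [(isClosed_tsupport b).isOpen_compl.mem_nhds hy'] with z hz
      rw [image_eq_zero_of_notMem_tsupport hz, zero_smul]
  · filter_upwards [b.eventuallyEq_one] with y hy
    rw [hy, Pi.one_apply, one_smul]

/-- Expansion of a functional on `ℝ × (ι → ℝ)` in the standard basis. -/
theorem map_prod_pi_eq_sum {ι : Type*} [Fintype ι] [DecidableEq ι] (f : ℝ × (ι → ℝ) →L[ℝ] ℝ)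
    (a : ℝ) (c : ι → ℝ) :
    f (a, c) = a * f (1, 0) + ∑ i, c i * f (0, Pi.single i 1) := by
  have h : ((a, c) : ℝ × (ι → ℝ)) =
      a • ((1, 0) : ℝ × (ι → ℝ)) + ∑ i, c i • ((0, Pi.single i 1) : ℝ × (ι → ℝ)) := by
    refine Prod.ext ?_ (funext fun j => ?_)
    · simp [Prod.fst_sum]
    · simp [Prod.snd_sum, Finset.sum_apply, Pi.single_apply]
  rw [h, map_add, map_sum, map_smul]
  simp only [map_smul, smul_eq_mul]

end FirstIntegral

/-- In the resonant normal form `ξ̇ = ξ(λ₁ + Φ₁(ρ,ζ)), η̇ = η(λ₂ + Φ₂(ρ,ζ)),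
ζ̇ᵢ = ρ·Ψᵢ(ρ,ζ)` with `ρ = ξ^m η^n`, `m·λ₁ + n·λ₂ = 0` and `Ψ₁(0,0) ≠ 0`: for any
`ω₁, …, ω_l` there is a smooth solution `U(ρ,ζ)` of
`Φ·U_ρ + Ψ₁·U_{ζ₁} + ⋯ + Ψ_l·U_{ζ_l} = 0` near `0` with `U_ρ(0,0) = ω₁` and
`U_{ζᵢ}(0,0) = ωᵢ` for `i = 2, …, l`; moreover any such `U` yields a first integral
`(ξ,η,ζ) ↦ U(ξ^m η^n, ζ)` of `V` near `0`. -/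
theorem stmt11 (l : ℕ) (hl : 0 < l) (n m : ℕ) (hn : 0 < n) (hm : 0 < m)
    (hcop : Nat.Coprime m n)
    (lam₁ lam₂ : ℝ) (hlam₁ : lam₁ ≠ 0) (hresonance : (m : ℝ) * lam₁ + (n : ℝ) * lam₂ = 0)
    (N₀ : Set (ℝ × (Fin l → ℝ))) (hN₀ : IsOpen N₀) (hN₀0 : (0 : ℝ × (Fin l → ℝ)) ∈ N₀)
    (Φ₁ Φ₂ : (ℝ × (Fin l → ℝ)) → ℝ) (Ψ : Fin l → (ℝ × (Fin l → ℝ)) → ℝ)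
    (hΦ₁ : ContDiffOn ℝ (⊤ : ℕ∞) Φ₁ N₀) (hΦ₂ : ContDiffOn ℝ (⊤ : ℕ∞) Φ₂ N₀)
    (hΨ : ∀ i, ContDiffOn ℝ (⊤ : ℕ∞) (Ψ i) N₀)
    (hΦ₁0 : Φ₁ 0 = 0) (hΦ₂0 : Φ₂ 0 = 0)
    (hΨ₁ : Ψ ⟨0, hl⟩ 0 ≠ 0)
    (Φ : (ℝ × (Fin l → ℝ)) → ℝ) (hΦ : Φ = fun p => (m : ℝ) * Φ₁ p + (n : ℝ) * Φ₂ p)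
    (ρ : (ℝ × ℝ × (Fin l → ℝ)) → ℝ) (hρ : ρ = fun x => x.1 ^ m * x.2.1 ^ n)
    (V : (ℝ × ℝ × (Fin l → ℝ)) → (ℝ × ℝ × (Fin l → ℝ)))
    (hV : V = fun x => (x.1 * (lam₁ + Φ₁ (ρ x, x.2.2)), x.2.1 * (lam₂ + Φ₂ (ρ x, x.2.2)),
      fun i => ρ x * Ψ i (ρ x, x.2.2)))
    (ω : Fin l → ℝ) :
    (∃ (N₁ : Set (ℝ × (Fin l → ℝ))) (U : (ℝ × (Fin l → ℝ)) → ℝ),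
      IsOpen N₁ ∧ (0 : ℝ × (Fin l → ℝ)) ∈ N₁ ∧ N₁ ⊆ N₀ ∧
      ContDiffOn ℝ (⊤ : ℕ∞) U N₁ ∧
      (∀ p ∈ N₁, Φ p * fderiv ℝ U p ((1 : ℝ), (0 : Fin l → ℝ)) +
        ∑ i : Fin l, Ψ i p * fderiv ℝ U p ((0 : ℝ), Pi.single i (1 : ℝ)) = 0) ∧
      fderiv ℝ U 0 ((1 : ℝ), (0 : Fin l → ℝ)) = ω ⟨0, hl⟩ ∧
      (∀ i : Fin l, i ≠ ⟨0, hl⟩ →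
        fderiv ℝ U 0 ((0 : ℝ), Pi.single i (1 : ℝ)) = ω i)) ∧
    (∀ (N₁ : Set (ℝ × (Fin l → ℝ))) (U : (ℝ × (Fin l → ℝ)) → ℝ),
      IsOpen N₁ → (0 : ℝ × (Fin l → ℝ)) ∈ N₁ → N₁ ⊆ N₀ →
      ContDiffOn ℝ (⊤ : ℕ∞) U N₁ →
      (∀ p ∈ N₁, Φ p * fderiv ℝ U p ((1 : ℝ), (0 : Fin l → ℝ)) +
        ∑ i : Fin l, Ψ i p * fderiv ℝ U p ((0 : ℝ), Pi.single i (1 : ℝ)) = 0) →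
      fderiv ℝ U 0 ((1 : ℝ), (0 : Fin l → ℝ)) = ω ⟨0, hl⟩ →
      (∀ i : Fin l, i ≠ ⟨0, hl⟩ →
        fderiv ℝ U 0 ((0 : ℝ), Pi.single i (1 : ℝ)) = ω i) →
      ∃ ε > 0, ∀ x : ℝ × ℝ × (Fin l → ℝ), ‖x‖ < ε →
        fderiv ℝ (fun y => U (ρ y, y.2.2)) x (V x) = 0) := by
  refine ⟨?_, ?_⟩
  · have hΦC : ContDiffOn ℝ (⊤ : ℕ∞) Φ N₀ := by
      rw [hΦ]
      exact (contDiffOn_const.mul hΦ₁).add (contDiffOn_const.mul hΦ₂)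
    have hΨ0C : ContinuousOn (Ψ ⟨0, hl⟩) N₀ := (hΨ _).continuousOn
    set s : Set (ℝ × (Fin l → ℝ)) := N₀ ∩ Ψ ⟨0, hl⟩ ⁻¹' {0}ᶜ
    have hso : IsOpen s := hΨ0C.isOpen_inter_preimage hN₀ isOpen_compl_singleton
    have hs0 : 0 ∈ s := ⟨hN₀0, hΨ₁⟩
    have hXC : ContDiffOn ℝ (⊤ : ℕ∞)
        (fun p => (Ψ ⟨0, hl⟩ p)⁻¹ • ((Φ p, fun i => Ψ i p) : ℝ × (Fin l → ℝ))) s :=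
      (((hΨ _).mono Set.inter_subset_left).inv fun p hp => hp.2).smul
        ((hΦC.prodMk (contDiffOn_pi.2 hΨ)).mono Set.inter_subset_left)
    obtain ⟨Y, hY, hYX⟩ := hXC.exists_contDiff_eventuallyEq hso hs0
    let ℓ : ℝ × (Fin l → ℝ) →L[ℝ] ℝ :=
      ContinuousLinearMap.proj ⟨0, hl⟩ ∘L ContinuousLinearMap.snd ℝ ℝ (Fin l → ℝ)
    obtain ⟨N, g, hNo, hN0, hgC, hgY, hg0⟩ := exists_contDiffOn_fderiv_apply_eq_zero hY ℓ
    obtain ⟨N', hN'sub, hN'o, hN'0⟩ := mem_nhds_iff.1 hYX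
    let L : ℝ × (Fin l → ℝ) →L[ℝ] ℝ :=
      ω ⟨0, hl⟩ • ContinuousLinearMap.fst ℝ ℝ (Fin l → ℝ) +
        ∑ i, ω i • (ContinuousLinearMap.proj i ∘L ContinuousLinearMap.snd ℝ ℝ (Fin l → ℝ))
    have hLapply : ∀ v, L v = ω ⟨0, hl⟩ * v.1 + ∑ i, ω i * v.2 i := fun v => by
      simp [L]
    have hLg : ∀ p ∈ N, ∀ v, fderiv ℝ (fun p => L (g p)) p v = L (fderiv ℝ g p v) := by
      intro p hp v
      have h1 := ((hgC.contDiffAt (hNo.mem_nhds hp)).differentiableAt (by simp)).hasFDerivAt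
      exact DFunLike.congr_fun (L.hasFDerivAt.comp p h1).fderiv v
    refine ⟨N ∩ (N' ∩ s), fun p => L (g p), hNo.inter (hN'o.inter hso), ⟨hN0, hN'0, hs0⟩,
      fun p hp => hp.2.2.1, L.contDiff.comp_contDiffOn (hgC.mono Set.inter_subset_left),
      ?_, ?_, ?_⟩
    · rintro p ⟨hpN, hpN', hps⟩
      have hne : Ψ ⟨0, hl⟩ p ≠ 0 := hps.2
      have hYp : Y p = (Ψ ⟨0, hl⟩ p)⁻¹ • ((Φ p, fun i => Ψ i p) : ℝ × (Fin l → ℝ)) :=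
        hN'sub hpN'
      have hℓ : ℓ (Y p) = 1 := by
        rw [hYp]
        exact inv_mul_cancel₀ hne
      have hX : ((Φ p, fun i => Ψ i p) : ℝ × (Fin l → ℝ)) = Ψ ⟨0, hl⟩ p • Y p := by
        rw [hYp, smul_inv_smul₀ hne]
      rw [← map_prod_pi_eq_sum (fderiv ℝ (fun p => L (g p)) p) (Φ p) fun i => Ψ i p, hX, map_smul,
        hLg p hpN, hgY p hpN hℓ, map_zero, smul_zero]
    · rw [hLg 0 hN0, hg0 _ (by simp [ℓ]), hLapply]
      simp
    · intro i hi
      rw [hLg 0 hN0, hg0 _ (by simp [ℓ, Ne.symm hi]), hLapply]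
      simp [Pi.single_apply]
  · intro N₁ U hN₁ hN₁0 hN₁N₀ hU hPDE _ _
    have hcont : Continuous fun x : ℝ × ℝ × (Fin l → ℝ) => (ρ x, x.2.2) := by
      rw [hρ]
      fun_prop
    have h0 : (ρ 0, (0 : ℝ × ℝ × (Fin l → ℝ)).2.2) ∈ N₁ := by
      have : ρ 0 = 0 := by simp [hρ, hm.ne']
      rw [this]
      exact hN₁0
    obtain ⟨ε, hε, hball⟩ := Metric.mem_nhds_iff.1
      (hcont.continuousAt.preimage_mem_nhds (hN₁.mem_nhds h0))
    refine ⟨ε, hε, fun x hx => ?_⟩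
    have hxN : (ρ x, x.2.2) ∈ N₁ := hball (mem_ball_zero_iff.2 hx)
    have hUd := ((hU.contDiffAt (hN₁.mem_nhds hxN)).differentiableAt (by simp)).hasFDerivAt
    have hηd : HasFDerivAt (fun y : ℝ × ℝ × (Fin l → ℝ) => y.2.1)
        (ContinuousLinearMap.fst ℝ ℝ (Fin l → ℝ) ∘L ContinuousLinearMap.snd ℝ ℝ _) x :=
      hasFDerivAt_fst.comp x hasFDerivAt_snd
    have hζd : HasFDerivAt (fun y : ℝ × ℝ × (Fin l → ℝ) => y.2.2)
        (ContinuousLinearMap.snd ℝ ℝ (Fin l → ℝ) ∘L ContinuousLinearMap.snd ℝ ℝ _) x :=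
      hasFDerivAt_snd.comp x hasFDerivAt_snd
    have hξd : HasFDerivAt (fun y : ℝ × ℝ × (Fin l → ℝ) => y.1)
        (ContinuousLinearMap.fst ℝ ℝ (ℝ × (Fin l → ℝ))) x := hasFDerivAt_fst
    obtain ⟨D, hρd, hDV⟩ : ∃ D, HasFDerivAt ρ D x ∧ D (V x) = ρ x * Φ (ρ x, x.2.2) := by
      refine ⟨_, ((hξd.pow m).mul (hηd.pow n)).congr_of_eventuallyEq (.of_eq hρ), ?_⟩
      have h1 : x.1 ^ (m - 1) * x.1 = x.1 ^ m := pow_sub_one_mul hm.ne' _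
      have h2 : x.2.1 ^ (n - 1) * x.2.1 = x.2.1 ^ n := pow_sub_one_mul hn.ne' _
      have hρx : ρ x = x.1 ^ m * x.2.1 ^ n := by rw [hρ]
      simp only [hV, hΦ, add_apply, smul_apply,
        ContinuousLinearMap.comp_apply, ContinuousLinearMap.coe_fst', ContinuousLinearMap.coe_snd',
        smul_eq_mul, nsmul_eq_mul]
      generalize Φ₁ (ρ x, x.2.2) = a
      generalize Φ₂ (ρ x, x.2.2) = b
      rw [hρx, ← h1, ← h2]
      linear_combination (x.1 ^ (m - 1) * x.1 * (x.2.1 ^ (n - 1) * x.2.1)) * hresonance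
    have hcomp := hUd.comp x (hρd.prodMk hζd)
    refine (DFunLike.congr_fun hcomp.fderiv (V x)).trans ?_
    have hW : (D.prod (ContinuousLinearMap.snd ℝ ℝ (Fin l → ℝ) ∘L
        ContinuousLinearMap.snd ℝ ℝ _)) (V x) =
        ρ x • ((Φ (ρ x, x.2.2), fun i => Ψ i (ρ x, x.2.2)) : ℝ × (Fin l → ℝ)) := by
      refine Prod.ext hDV ?_
      rw [hV]
      rfl
    rw [ContinuousLinearMap.comp_apply, hW, map_smul, map_prod_pi_eq_sum, hPDE _ hxN, smul_zero]
end

section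
/- Assume in addition that Φ(0, ζ) = 0 for all ζ in a neighborhood of 0 in ℝ^l. Then the germ of V at 0 is C^∞-smoothly orbitally equivalent to the germ at 0 of the vector field ξ̇ = n·ξ, η̇ = −m·η, ζ̇₁ = ξ^m η^n, ζ̇_i = 0 (i = 2, …, l). -/
open Filter Topology

/-- Two vector fields `V`, `N` with marked points `x₀`, `y₀` are `C^∞`-smoothly orbitally
equivalent (as germs) if there are open neighborhoods `U ∋ x₀`, `U' ∋ y₀` with `U`
contained in the domain `Dom`, a `C^∞` diffeomorphism `Φ : U → U'` with `Φ x₀ = y₀`, and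
a `C^∞` nowhere-vanishing function `h : U → ℝ` with `DΦ(x)·V(x) = h(x)·N(Φ(x))` on `U`. -/
def OrbEquiv {E : Type*} [NormedAddCommGroup E] [NormedSpace ℝ E]
    (Dom : Set E) (V N : E → E) (x₀ y₀ : E) : Prop :=
  ∃ (U U' : Set E) (Φ Ψ : E → E) (h : E → ℝ),
    IsOpen U ∧ IsOpen U' ∧ x₀ ∈ U ∧ y₀ ∈ U' ∧ U ⊆ Dom ∧
    ContDiffOn ℝ (⊤ : ℕ∞) Φ U ∧ ContDiffOn ℝ (⊤ : ℕ∞) Ψ U' ∧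
    Φ x₀ = y₀ ∧ Set.MapsTo Φ U U' ∧ Set.MapsTo Ψ U' U ∧
    (∀ x ∈ U, Ψ (Φ x) = x) ∧ (∀ y ∈ U', Φ (Ψ y) = y) ∧
    ContDiffOn ℝ (⊤ : ℕ∞) h U ∧ (∀ x ∈ U, h x ≠ 0) ∧
    ∀ x ∈ U, fderiv ℝ Φ x (V x) = h x • N (Φ x)

section Superposition

variable {K : Type*} [TopologicalSpace K] [CompactSpace K]
  {E F : Type*} [NormedAddCommGroup E] [NormedSpace ℝ E] [NormedAddCommGroup F] [NormedSpace ℝ F]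

/-- Pointwise application `(A, u) ↦ (k ↦ A k (u k))` as a continuous bilinear map. -/
noncomputable def pointwiseApplyL : C(K, E →L[ℝ] F) →L[ℝ] C(K, E) →L[ℝ] C(K, F) :=
  LinearMap.mkContinuous₂
    (LinearMap.mk₂ ℝ
      (fun (A : C(K, E →L[ℝ] F)) (u : C(K, E)) =>
        (⟨fun k => A k (u k), A.continuous.clm_apply u.continuous⟩ : C(K, F)))
      (by intros; ext; simp) (by intros; ext; simp) (by intros; ext; simp) (by intros; ext; simp))
    1
    (by
      intro A u
      refine (ContinuousMap.norm_le _ (by positivity)).2 fun k => ?_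
      rw [one_mul]
      exact (A k).le_of_opNorm_le_of_le (A.norm_coe_le_norm k) (u.norm_coe_le_norm k))

@[simp]
theorem pointwiseApplyL_apply (A : C(K, E →L[ℝ] F)) (u : C(K, E)) (k : K) :
    pointwiseApplyL A u k = A k (u k) := rfl

theorem exists_dist_postcomp_lt {K E F : Type*} [TopologicalSpace K] [CompactSpace K]
    [NormedAddCommGroup E] [NormedAddCommGroup F] (g : C(E, F)) (u : C(K, E)) {c : ℝ} (hc : 0 < c) :
    ∃ δ > 0, ∀ v, dist v u < δ → dist (g.comp v) (g.comp u) < c :=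
  Metric.continuous_iff.1 (ContinuousMap.continuous_postcomp (X := K) g) u c hc

theorem hasFDerivAt_postcomp {f : E → F} (hf : ContDiff ℝ 1 f) (u : C(K, E)) :
    HasFDerivAt (fun v : C(K, E) => (⟨f, hf.continuous⟩ : C(E, F)).comp v)
      (pointwiseApplyL
        ((⟨fderiv ℝ f, hf.continuous_fderiv one_ne_zero⟩ : C(E, E →L[ℝ] F)).comp u)) u := by
  rw [hasFDerivAt_iff_isLittleO, Asymptotics.isLittleO_iff]
  intro c hc
  obtain ⟨δ, hδ, hball⟩ := exists_dist_postcomp_lt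
    (⟨fderiv ℝ f, hf.continuous_fderiv one_ne_zero⟩ : C(E, E →L[ℝ] F)) u hc
  refine Metric.eventually_nhds_iff.2 ⟨δ, hδ, fun v hv => ?_⟩
  refine (ContinuousMap.norm_le _ (by positivity)).2 fun k => ?_
  have hseg : ∀ x ∈ segment ℝ (u k) (v k), ‖fderiv ℝ f x - fderiv ℝ f (u k)‖ ≤ c := by
    intro x hx
    rw [segment_eq_image'] at hx
    obtain ⟨s, hs, rfl⟩ := hx
    have hw : dist (u + s • (v - u)) u < δ := by
      rw [dist_eq_norm, add_sub_cancel_left, norm_smul, Real.norm_of_nonneg hs.1]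
      rw [dist_eq_norm] at hv
      nlinarith [hs.2, norm_nonneg (v - u)]
    have hk := (ContinuousMap.dist_apply_le_dist k).trans (hball _ hw).le
    rw [dist_eq_norm] at hk
    simpa using hk
  have hmv := Convex.norm_image_sub_le_of_norm_fderiv_le' (𝕜 := ℝ) (f := f)
    (fun x _ => hf.differentiable one_ne_zero x) hseg (convex_segment _ _)
    (left_mem_segment ℝ _ _) (right_mem_segment ℝ _ _)
  refine le_trans (by simpa using hmv) ?_
  gcongr
  simpa using (v - u).norm_coe_le_norm k

end Superposition

universe u

theorem contDiff_postcomp_nat {K : Type*} [TopologicalSpace K] [CompactSpace K]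
    {E : Type u} [NormedAddCommGroup E] [NormedSpace ℝ E] (n : ℕ) :
    ∀ {F : Type u} [NormedAddCommGroup F] [NormedSpace ℝ F] {f : E → F}
      (hf : ContDiff ℝ (⊤ : ℕ∞) f),
      ContDiff ℝ n (fun v : C(K, E) => (⟨f, hf.continuous⟩ : C(E, F)).comp v) := by
  induction n with
  | zero =>
    intro F _ _ f hf
    exact contDiff_zero.2 (ContinuousMap.continuous_postcomp _)
  | succ n ih =>
    intro F _ _ f hf
    have hf1 : ContDiff ℝ 1 f := hf.of_le (by exact_mod_cast le_top)
    push_cast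
    rw [contDiff_succ_iff_hasFDerivAt]
    refine ⟨fun v => pointwiseApplyL
        ((⟨fderiv ℝ f, hf1.continuous_fderiv one_ne_zero⟩ : C(E, E →L[ℝ] F)).comp v), ?_,
      fun v => hasFDerivAt_postcomp hf1 v⟩
    have h := ih (contDiff_infty_iff_fderiv.1 hf).2
    exact ContDiff.continuousLinearMap_comp (pointwiseApplyL (K := K) (E := E) (F := F)) h

/-- The superposition operator `v ↦ f ∘ v` of a smooth function is smooth on `C(K, E)`. -/
theorem contDiff_postcomp {K : Type*} [TopologicalSpace K] [CompactSpace K]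
    {E F : Type u} [NormedAddCommGroup E] [NormedSpace ℝ E] [NormedAddCommGroup F]
    [NormedSpace ℝ F] {f : E → F} (hf : ContDiff ℝ (⊤ : ℕ∞) f) :
    ContDiff ℝ (⊤ : ℕ∞) (fun v : C(K, E) => (⟨f, hf.continuous⟩ : C(E, F)).comp v) :=
  contDiff_infty.2 fun n => contDiff_postcomp_nat n hf

section Primitive

variable {E : Type*} [NormedAddCommGroup E]

/-- Extension of a continuous curve on `[-1, 1]` to `ℝ` by constants. -/
noncomputable def extendCurve (u : C(Set.Icc (-1 : ℝ) 1, E)) : C(ℝ, E) :=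
  u.IccExtend (by norm_num)

theorem extendCurve_of_mem (u : C(Set.Icc (-1 : ℝ) 1, E)) {s : ℝ} (hs : s ∈ Set.Icc (-1 : ℝ) 1) :
    extendCurve u s = u ⟨s, hs⟩ :=
  Set.IccExtend_of_mem _ _ hs

theorem norm_extendCurve_le (u : C(Set.Icc (-1 : ℝ) 1, E)) (s : ℝ) : ‖extendCurve u s‖ ≤ ‖u‖ :=
  u.norm_coe_le_norm _

variable [NormedSpace ℝ E]

/-- The primitive vanishing at `0`, as a continuous linear operator on curves on `[-1, 1]`. -/
noncomputable def primitiveL :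
    C(Set.Icc (-1 : ℝ) 1, E) →L[ℝ] C(Set.Icc (-1 : ℝ) 1, E) :=
  LinearMap.mkContinuous
    { toFun := fun u => ⟨fun t => ∫ s in (0 : ℝ)..t, extendCurve u s,
        (intervalIntegral.continuous_primitive
          (fun _ _ => (extendCurve u).continuous.intervalIntegrable _ _) 0).comp
          continuous_subtype_val⟩
      map_add' := by
        intro u v
        ext t
        exact intervalIntegral.integral_add ((extendCurve u).continuous.intervalIntegrable _ _)
          ((extendCurve v).continuous.intervalIntegrable _ _)
      map_smul' := by
        intro c u
        ext t
        exact intervalIntegral.integral_smul c _ }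
    1
    (by
      intro u
      refine (ContinuousMap.norm_le _ (by positivity)).2 fun t => ?_
      refine (intervalIntegral.norm_integral_le_of_norm_le_const
        (fun s _ => norm_extendCurve_le u s)).trans ?_
      have ht : |(t : ℝ) - 0| ≤ 1 := by
        rw [sub_zero]
        exact abs_le.2 t.2
      nlinarith [norm_nonneg u])

theorem primitiveL_apply (u : C(Set.Icc (-1 : ℝ) 1, E)) (t : Set.Icc (-1 : ℝ) 1) :
    primitiveL u t = ∫ s in (0 : ℝ)..t, extendCurve u s := rfl

end Primitive

/-- Implicit function theorem with `C^∞` smoothness on a whole neighborhood. -/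
theorem exists_smooth_implicitFunction {A B F : Type*}
    [NormedAddCommGroup A] [NormedSpace ℝ A] [CompleteSpace A]
    [NormedAddCommGroup B] [NormedSpace ℝ B] [CompleteSpace B]
    [NormedAddCommGroup F] [NormedSpace ℝ F] [CompleteSpace F]
    {G : A × B → F} (hG : ContDiff ℝ (⊤ : ℕ∞) G) {a : A} {b : B} (h0 : G (a, b) = 0)
    (hinv : (fderiv ℝ G (a, b) ∘L .inr ℝ A B).IsInvertible) :
    ∃ ψ : A → B, ψ a = b ∧ (∀ᶠ p in 𝓝 a, G (p, ψ p) = 0) ∧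
      (∀ᶠ p in 𝓝 a, ContDiffAt ℝ (⊤ : ℕ∞) ψ p) ∧
      ∀ᶠ v in 𝓝 (a, b), G v = 0 → ψ v.1 = v.2 := by
  have hne : ((⊤ : ℕ∞) : WithTop ℕ∞) ≠ 0 := by simp
  have hGa : ∀ v, ContDiffAt ℝ (⊤ : ℕ∞) G v := fun v => hG.contDiffAt
  set ψ := (hGa (a, b)).implicitFunction hne hinv with hψ
  have hψa : ψ a = b := (hGa (a, b)).implicitFunction_apply_self hne hinv
  have hzero : ∀ᶠ p in 𝓝 a, G (p, ψ p) = 0 := by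
    simpa [h0] using (hGa (a, b)).eventually_apply_implicitFunction hne hinv
  have hsmooth : ContDiffAt ℝ (⊤ : ℕ∞) ψ a := (hGa (a, b)).contDiffAt_implicitFunction hne hinv
  have huniq : ∀ᶠ v in 𝓝 (a, b), G v = 0 → ψ v.1 = v.2 := by
    filter_upwards [(hGa (a, b)).eventually_apply_eq_iff_implicitFunction hne hinv] with v hv hv0
    exact hv.1 (hv0.trans h0.symm)
  refine ⟨ψ, hψa, hzero, ?_, huniq⟩
  have hcont : ∀ᶠ p in 𝓝 a, ContinuousAt ψ p := by
    have h1 : ContDiffAt ℝ 1 ψ a := hsmooth.of_le (by exact_mod_cast le_top)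
    filter_upwards [h1.eventually (by simp)] with p hp using hp.continuousAt
  have hinv' : ∀ᶠ p in 𝓝 a, (fderiv ℝ G (p, ψ p) ∘L .inr ℝ A B).IsInvertible := by
    have hopen : IsOpen {L : B →L[ℝ] F | L.IsInvertible} := ContinuousLinearEquiv.isOpen
    have hc : ContinuousAt (fun p => fderiv ℝ G (p, ψ p) ∘L .inr ℝ A B) a := by
      have h1 : ContinuousAt (fun p => fderiv ℝ G (p, ψ p)) a :=
        (hG.continuous_fderiv hne).continuousAt.comp
          (continuousAt_id.prodMk hsmooth.continuousAt)
      exact h1.clm_comp continuousAt_const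
    refine hc.eventually (hopen.mem_nhds ?_)
    simpa [hψa] using hinv
  filter_upwards [hzero.eventually_nhds, hcont, hinv'] with p hp0 hpc hpi
  have heq := (hGa (p, ψ p)).eventually_apply_eq_iff_implicitFunction hne hpi
  have htend : Tendsto (fun q => (q, ψ q)) (𝓝 p) (𝓝 (p, ψ p)) :=
    continuousAt_id.prodMk hpc
  refine ((hGa (p, ψ p)).contDiffAt_implicitFunction hne hpi).congr_of_eventuallyEq ?_
  filter_upwards [htend.eventually heq, hp0] with q hq hq0
  exact (hq.1 (hq0.trans hp0.self_of_nhds.symm)).symm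

/-- A locally smooth function agrees near the base point with a globally smooth one. -/
theorem exists_contDiff_eventuallyEq {E F : Type*} [NormedAddCommGroup E] [NormedSpace ℝ E]
    [FiniteDimensional ℝ E] [NormedAddCommGroup F] [NormedSpace ℝ F] {f : E → F} {x : E}
    (hf : ∀ᶠ y in 𝓝 x, ContDiffAt ℝ (⊤ : ℕ∞) f y) :
    ∃ g : E → F, ContDiff ℝ (⊤ : ℕ∞) g ∧ g =ᶠ[𝓝 x] f := by
  obtain ⟨r, hr, hball⟩ := Metric.eventually_nhds_iff.1 hf
  let b : ContDiffBump x := ⟨r / 4, r / 2, by linarith, by linarith⟩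
  refine ⟨fun y => b y • f y, contDiff_iff_contDiffAt.2 fun y => ?_, ?_⟩
  · by_cases hy : dist y x < r
    · exact b.contDiffAt.smul (hball hy)
    · have hmem : y ∉ tsupport b := by
        rw [b.tsupport_eq, Metric.mem_closedBall]
        change ¬ dist y x ≤ r / 2
        linarith
      have hzero : (fun y => b y • f y) =ᶠ[𝓝 y] fun _ => 0 := by
        filter_upwards [notMem_tsupport_iff_eventuallyEq.1 hmem] with z hz
        simp [hz]
      exact contDiffAt_const.congr_of_eventuallyEq hzero
  · filter_upwards [b.eventuallyEq_one] with y hy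
    simp [hy]

theorem mul_mem_Icc_neg_one_one {a b : ℝ} (ha : a ∈ Set.Icc (-1 : ℝ) 1)
    (hb : b ∈ Set.Icc (-1 : ℝ) 1) : a * b ∈ Set.Icc (-1 : ℝ) 1 := by
  have h : |a * b| ≤ 1 := by
    rw [abs_mul]
    exact mul_le_one₀ (abs_le.2 ha) (abs_nonneg _) (abs_le.2 hb)
  exact abs_le.1 h

/-- Rescaling of the time variable of a curve on `[-1, 1]`. -/
def rescaleCurve {E : Type*} [TopologicalSpace E] (c : Set.Icc (-1 : ℝ) 1)
    (u : C(Set.Icc (-1 : ℝ) 1, E)) : C(Set.Icc (-1 : ℝ) 1, E) :=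
  u.comp ⟨fun t => ⟨c * t, mul_mem_Icc_neg_one_one c.2 t.2⟩, by fun_prop⟩

theorem rescaleCurve_apply {E : Type*} [TopologicalSpace E] (c : Set.Icc (-1 : ℝ) 1)
    (u : C(Set.Icc (-1 : ℝ) 1, E)) (t : Set.Icc (-1 : ℝ) 1) (h) :
    rescaleCurve c u t = u ⟨c * t, h⟩ := rfl

theorem primitiveL_rescaleCurve {E : Type*} [NormedAddCommGroup E] [NormedSpace ℝ E]
    (c : Set.Icc (-1 : ℝ) 1) (u : C(Set.Icc (-1 : ℝ) 1, E)) :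
    (c : ℝ) • primitiveL (rescaleCurve c u) = rescaleCurve c (primitiveL u) := by
  ext t
  have ht : (c : ℝ) * t ∈ Set.Icc (-1 : ℝ) 1 := mul_mem_Icc_neg_one_one c.2 t.2
  rw [rescaleCurve_apply c _ t ht, ContinuousMap.smul_apply, primitiveL_apply, primitiveL_apply]
  have hcongr : ∫ s in (0 : ℝ)..t, extendCurve (rescaleCurve c u) s =
      ∫ s in (0 : ℝ)..t, extendCurve u (c * s) := by
    refine intervalIntegral.integral_congr fun s hs => ?_
    have hs1 : s ∈ Set.Icc (-1 : ℝ) 1 :=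
      (Set.uIcc_subset_Icc (by norm_num) t.2) hs
    have hs2 : (c : ℝ) * s ∈ Set.Icc (-1 : ℝ) 1 := mul_mem_Icc_neg_one_one c.2 hs1
    simp only [extendCurve_of_mem _ hs1, extendCurve_of_mem _ hs2]
    rfl
  rw [hcongr, intervalIntegral.smul_integral_comp_mul_left, mul_zero]

/-- The affine family of curves `t ↦ (p, v t)` as a continuous linear function of `(p, v)`. -/
noncomputable def parameterCurveL {P E : Type*} [NormedAddCommGroup P] [NormedSpace ℝ P]
    [FiniteDimensional ℝ P] [NormedAddCommGroup E] [NormedSpace ℝ E] :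
    P × C(Set.Icc (-1 : ℝ) 1, E) →L[ℝ] C(Set.Icc (-1 : ℝ) 1, P × E) :=
  (LinearMap.toContinuousLinearMap
    { toFun := fun p : P => ContinuousMap.const (Set.Icc (-1 : ℝ) 1) ((p, 0) : P × E)
      map_add' := by intros; ext <;> simp
      map_smul' := by intros; ext <;> simp }).coprod
  ((ContinuousLinearMap.inr ℝ P E).compLeftContinuous ℝ (Set.Icc (-1 : ℝ) 1))

@[simp]
theorem parameterCurveL_apply {P E : Type*} [NormedAddCommGroup P] [NormedSpace ℝ P]
    [FiniteDimensional ℝ P] [NormedAddCommGroup E] [NormedSpace ℝ E]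
    (p : P) (v : C(Set.Icc (-1 : ℝ) 1, E)) (t : Set.Icc (-1 : ℝ) 1) :
    parameterCurveL (p, v) t = (p, v t) := by
  simp [parameterCurveL]

/-- Smooth dependence on time and parameters: the solution of `v' = f (p, v)`, `v 0 = 0`, for
a globally smooth `f`. -/
theorem exists_smooth_solution_of_contDiff {P E : Type u} [NormedAddCommGroup P]
    [NormedSpace ℝ P] [FiniteDimensional ℝ P] [NormedAddCommGroup E] [NormedSpace ℝ E]
    [CompleteSpace E] {f : P × E → E} (hf : ContDiff ℝ (⊤ : ℕ∞) f) :
    ∃ φ : ℝ × P → E, (∀ᶠ q in 𝓝 0, ContDiffAt ℝ (⊤ : ℕ∞) φ q) ∧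
      (∀ᶠ p in 𝓝 0, φ (0, p) = 0) ∧
      ∀ᶠ q : ℝ × P in 𝓝 0, HasDerivAt (fun t => φ (t, q.2)) (f (q.2, φ q)) q.1 := by
  have : CompleteSpace P := FiniteDimensional.complete ℝ P
  let N : (ℝ × P) × C(Set.Icc (-1 : ℝ) 1, E) → C(Set.Icc (-1 : ℝ) 1, E) := fun w =>
    primitiveL ((⟨f, hf.continuous⟩ : C(P × E, E)).comp (parameterCurveL (w.1.2, w.2)))
  let G : (ℝ × P) × C(Set.Icc (-1 : ℝ) 1, E) → C(Set.Icc (-1 : ℝ) 1, E) := fun w =>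
    w.2 - w.1.1 • N w
  have hN : ContDiff ℝ (⊤ : ℕ∞) N := by
    have h1 : ContDiff ℝ (⊤ : ℕ∞)
        (fun w : (ℝ × P) × C(Set.Icc (-1 : ℝ) 1, E) => (w.1.2, w.2)) := by fun_prop
    exact ContDiff.continuousLinearMap_comp primitiveL
      ((contDiff_postcomp hf).comp (ContDiff.continuousLinearMap_comp parameterCurveL h1))
  have hG : ContDiff ℝ (⊤ : ℕ∞) G := by
    have h1 : ContDiff ℝ (⊤ : ℕ∞)
        (fun w : (ℝ × P) × C(Set.Icc (-1 : ℝ) 1, E) => w.1.1) := by fun_prop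
    exact contDiff_snd.sub (h1.smul hN)
  have hG0 : G (0, 0) = 0 := by simp [G]
  have hinv : (fderiv ℝ G (0, 0) ∘L .inr ℝ (ℝ × P) C(Set.Icc (-1 : ℝ) 1, E)).IsInvertible := by
    have h1 : HasFDerivAt (fun v : C(Set.Icc (-1 : ℝ) 1, E) => G (0, v))
        (fderiv ℝ G (0, 0) ∘L .inr ℝ (ℝ × P) C(Set.Icc (-1 : ℝ) 1, E)) 0 :=
      (hG.differentiable (by simp) (0, 0)).hasFDerivAt.comp (0 : C(Set.Icc (-1 : ℝ) 1, E))
        (hasFDerivAt_prodMk_right (0 : ℝ × P) 0)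
    have h2 : (fun v : C(Set.Icc (-1 : ℝ) 1, E) => G (0, v)) = id := by
      ext v
      simp [G]
    rw [h2] at h1
    rw [h1.unique (hasFDerivAt_id 0)]
    exact ⟨ContinuousLinearEquiv.refl ℝ _, rfl⟩
  obtain ⟨ψ, hψ0, hψG, hψs, hψu⟩ := exists_smooth_implicitFunction hG hG0 hinv
  have hone : (1 : ℝ) ∈ Set.Icc (-1 : ℝ) 1 := by norm_num
  have hψcont : ContinuousAt ψ 0 := hψs.self_of_nhds.continuousAt
  obtain ⟨δ, hδ, hu⟩ := Metric.eventually_nhds_iff.1 hψu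
  have hsmall : ∀ᶠ q in 𝓝 (0 : ℝ × P), dist (ψ q) 0 < δ := by
    have h := hψcont.eventually (Metric.ball_mem_nhds _ hδ)
    simpa [hψ0] using h
  obtain ⟨ε, hε, hgood⟩ := Metric.eventually_nhds_iff.1
    ((hψG.and hsmall).and (Metric.ball_mem_nhds (0 : ℝ × P) hδ))
  have hscale : ∀ (c : Set.Icc (-1 : ℝ) 1) (q : ℝ × P), dist q 0 < ε →
      ψ (c * q.1, q.2) = rescaleCurve c (ψ q) := by
    intro c q hq
    obtain ⟨⟨hq0, hqd⟩, hqδ⟩ := hgood hq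
    refine hu (y := ((c * q.1, q.2), rescaleCurve c (ψ q))) ?_ ?_
    · rw [Prod.dist_eq, Prod.dist_eq, max_lt_iff, max_lt_iff]
      rw [Prod.dist_eq, max_lt_iff] at hqδ
      refine ⟨⟨lt_of_le_of_lt ?_ hqδ.1, hqδ.2⟩, lt_of_le_of_lt ?_ hqd⟩
      · simp only [dist_zero_right, Prod.fst_zero, norm_mul, Real.norm_eq_abs]
        exact mul_le_of_le_one_left (abs_nonneg _) (abs_le.2 c.2)
      · rw [dist_zero_right, dist_zero_right]
        exact (ContinuousMap.norm_le _ (norm_nonneg _)).2 fun t => (ψ q).norm_coe_le_norm _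
    · have hfix : ψ q = q.1 • N (q, ψ q) := sub_eq_zero.1 hq0
      have hNs : (c : ℝ) • N ((c * q.1, q.2), rescaleCurve c (ψ q)) =
          rescaleCurve c (N (q, ψ q)) := by
        rw [← primitiveL_rescaleCurve]
        congr 2
      change rescaleCurve c (ψ q) - ((c : ℝ) * q.1) • N ((c * q.1, q.2), rescaleCurve c (ψ q)) = 0
      rw [mul_comm, mul_smul, hNs, sub_eq_zero]
      conv_lhs => rw [hfix]
      rfl
  have hval : ∀ (s : ℝ) (hs : s ∈ Set.Icc (-1 : ℝ) 1) (q : ℝ × P), dist q 0 < ε →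
      ψ (s * q.1, q.2) ⟨1, hone⟩ = ψ q ⟨s, hs⟩ := by
    intro s hs q hq
    rw [hscale ⟨s, hs⟩ q hq, rescaleCurve_apply _ _ _ (by simpa using hs)]
    simp
  refine ⟨fun q => ψ q ⟨1, hone⟩, ?_, ?_, ?_⟩
  · filter_upwards [hψs] with q hq
    exact (ContinuousMap.evalCLM ℝ (⟨1, hone⟩ : Set.Icc (-1 : ℝ) 1)).contDiff.contDiffAt.comp q hq
  · have htend : Tendsto (fun p : P => ((0 : ℝ), p)) (𝓝 0) (𝓝 (0, 0)) := by
      exact (Continuous.prodMk_right (0 : ℝ)).tendsto 0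
    filter_upwards [htend.eventually hψG] with p hp
    have : ψ (0, p) = 0 := by simpa [G] using hp
    simp [this]
  · refine Metric.eventually_nhds_iff.2 ⟨ε / 2, by positivity, fun q hq => ?_⟩
    set r : ℝ := ε / 2 with hr
    have hr0 : 0 < r := by positivity
    rw [Prod.dist_eq, max_lt_iff, Prod.fst_zero, Prod.snd_zero] at hq
    have hq1 : |q.1| < r := by simpa [Real.dist_eq] using hq.1
    have hqr : dist (r, q.2) (0 : ℝ × P) < ε := by
      rw [Prod.dist_eq, max_lt_iff]
      refine ⟨?_, by simpa using hq.2.trans (by linarith)⟩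
      rw [Prod.fst_zero, Real.dist_eq, sub_zero, abs_of_pos hr0]
      linarith
    have hrep : ∀ t : ℝ, |t| ≤ r → ∀ h : r⁻¹ * t ∈ Set.Icc (-1 : ℝ) 1,
        ψ (t, q.2) ⟨1, hone⟩ = ψ (r, q.2) ⟨r⁻¹ * t, h⟩ := by
      intro t ht h
      rw [← hval (r⁻¹ * t) h (r, q.2) hqr]
      congr 3
      field_simp
    have hmem : ∀ t : ℝ, |t| ≤ r → r⁻¹ * t ∈ Set.Icc (-1 : ℝ) 1 := by
      intro t ht
      have h : |r⁻¹ * t| ≤ 1 := by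
        rw [abs_mul, abs_of_pos (inv_pos.2 hr0), inv_mul_le_iff₀ hr0]
        linarith
      exact abs_le.1 h
    obtain ⟨⟨hq0, -⟩, -⟩ := hgood hqr
    have hfix : ψ (r, q.2) = r • N ((r, q.2), ψ (r, q.2)) := sub_eq_zero.1 hq0
    set w := (⟨f, hf.continuous⟩ : C(P × E, E)).comp (parameterCurveL (q.2, ψ (r, q.2))) with hw
    have hψ_eq : (fun t => ψ (t, q.2) ⟨1, hone⟩) =ᶠ[𝓝 q.1]
        fun t => r • ∫ s in (0 : ℝ)..(r⁻¹ * t), extendCurve w s := by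
      have hev : ∀ᶠ t in 𝓝 q.1, |t| < r := continuous_abs.continuousAt.eventually_lt_const hq1
      filter_upwards [hev] with t ht
      rw [hrep t ht.le (hmem t ht.le)]
      conv_lhs => rw [hfix]
      rfl
    refine HasDerivAt.congr_of_eventuallyEq ?_ hψ_eq
    have hd := ((extendCurve w).continuous.integral_hasStrictDerivAt 0
      (r⁻¹ * q.1)).hasDerivAt.scomp q.1 ((hasDerivAt_id q.1).const_mul r⁻¹)
    refine (hd.const_smul r).congr_deriv ?_
    rw [mul_one, smul_smul, mul_inv_cancel₀ hr0.ne', one_smul,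
      extendCurve_of_mem _ (hmem _ hq1.le), hw, ContinuousMap.comp_apply, parameterCurveL_apply,
      ← hrep q.1 hq1.le]
    rfl

/-- Smooth dependence on time and parameters: the local solution of `v' = f (p, v)`, `v 0 = 0`,
for an `f` that is smooth near the origin. -/
theorem exists_smooth_solution {P E : Type u} [NormedAddCommGroup P]
    [NormedSpace ℝ P] [FiniteDimensional ℝ P] [NormedAddCommGroup E] [NormedSpace ℝ E]
    [FiniteDimensional ℝ E] {f : P × E → E} (hf : ∀ᶠ x in 𝓝 0, ContDiffAt ℝ (⊤ : ℕ∞) f x) :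
    ∃ φ : ℝ × P → E, (∀ᶠ q in 𝓝 0, ContDiffAt ℝ (⊤ : ℕ∞) φ q) ∧
      (∀ᶠ p in 𝓝 0, φ (0, p) = 0) ∧
      ∀ᶠ q : ℝ × P in 𝓝 0, HasDerivAt (fun t => φ (t, q.2)) (f (q.2, φ q)) q.1 := by
  have : CompleteSpace E := FiniteDimensional.complete ℝ E
  obtain ⟨g, hg, hgf⟩ := exists_contDiff_eventuallyEq hf
  obtain ⟨φ, hφs, hφ0, hφd⟩ := exists_smooth_solution_of_contDiff hg
  refine ⟨φ, hφs, hφ0, ?_⟩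
  have hφz : φ 0 = 0 := hφ0.self_of_nhds
  have htend : Tendsto (fun q : ℝ × P => (q.2, φ q)) (𝓝 0) (𝓝 0) := by
    have h : ContinuousAt (fun q : ℝ × P => (q.2, φ q)) 0 :=
      continuousAt_snd.prodMk hφs.self_of_nhds.continuousAt
    rwa [ContinuousAt, hφz] at h
  filter_upwards [hφd, htend.eventually hgf] with q hq hqg
  rwa [← hqg]

/-- Parametric Hadamard lemma: a smooth function differs from its restriction to `{0} × F` by
a smooth multiple of the first coordinate. -/
theorem exists_smooth_hadamard_quotient {F : Type} [NormedAddCommGroup F] [NormedSpace ℝ F]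
    [FiniteDimensional ℝ F] {f : ℝ × F → ℝ} (hf : ContDiff ℝ (⊤ : ℕ∞) f) :
    ∃ χ : ℝ × F → ℝ, ContDiff ℝ (⊤ : ℕ∞) χ ∧ ∀ x z, f (x, z) = f (0, z) + x * χ (x, z) := by
  have hone : (1 : ℝ) ∈ Set.Icc (-1 : ℝ) 1 := by norm_num
  let g : ℝ × F → ℝ := fun q => fderiv ℝ f q (1, 0)
  have hg : ContDiff ℝ (⊤ : ℕ∞) g := (contDiff_infty_iff_fderiv.1 hf).2.clm_apply contDiff_const
  let A : ℝ × F →L[ℝ] C(Set.Icc (-1 : ℝ) 1, ℝ × F) := LinearMap.toContinuousLinearMap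
    { toFun := fun q => ⟨fun s => ((s : ℝ) * q.1, q.2), by fun_prop⟩
      map_add' := by intro a b; ext <;> simp [mul_add]
      map_smul' := by intro a b; ext <;> simp [mul_left_comm] }
  refine ⟨fun q => primitiveL ((⟨g, hg.continuous⟩ : C(ℝ × F, ℝ)).comp (A q)) ⟨1, hone⟩, ?_, ?_⟩
  · exact (ContinuousMap.evalCLM ℝ (⟨1, hone⟩ : Set.Icc (-1 : ℝ) 1)).contDiff.comp
      (ContDiff.continuousLinearMap_comp primitiveL ((contDiff_postcomp hg).comp A.contDiff))
  · intro x z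
    have hd : ∀ s : ℝ, HasDerivAt (fun s : ℝ => f (s * x, z)) (x * g (s * x, z)) s := by
      intro s
      have h1 : HasDerivAt (fun s : ℝ => (s * x, z)) (x, (0 : F)) s := by
        simpa using ((hasDerivAt_id s).mul_const x).prodMk (hasDerivAt_const s z)
      have h2 := (hf.differentiable (by simp) (s * x, z)).hasFDerivAt.comp_hasDerivAt s h1
      refine h2.congr_deriv ?_
      have : (x, (0 : F)) = x • ((1 : ℝ), (0 : F)) := by simp
      rw [this, map_smul]
      rfl
    have hc : Continuous fun s : ℝ => x * g (s * x, z) :=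
      continuous_const.mul (hg.continuous.comp (by fun_prop))
    have hFTC := intervalIntegral.integral_eq_sub_of_hasDerivAt (a := 0) (b := 1)
      (fun s _ => hd s) (hc.intervalIntegrable _ _)
    rw [intervalIntegral.integral_const_mul] at hFTC
    have hI : ∫ s in (0 : ℝ)..1, g (s * x, z) =
        primitiveL ((⟨g, hg.continuous⟩ : C(ℝ × F, ℝ)).comp (A (x, z))) ⟨1, hone⟩ := by
      rw [primitiveL_apply]
      refine intervalIntegral.integral_congr fun s hs => ?_
      have hs1 : s ∈ Set.Icc (-1 : ℝ) 1 :=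
        Set.uIcc_subset_Icc (by norm_num) hone hs
      simp only [extendCurve_of_mem _ hs1]
      rfl
    change f (x, z) = f (0, z) +
      x * primitiveL ((⟨g, hg.continuous⟩ : C(ℝ × F, ℝ)).comp (A (x, z))) ⟨1, hone⟩
    rw [← hI, hFTC]
    simp

/-- Orbital equivalence from a smooth local change of variables `Θ` going from the normal form
`N` to `V`. -/
theorem OrbEquiv.of_inverse {E : Type*} [NormedAddCommGroup E] [NormedSpace ℝ E]
    [CompleteSpace E] {V N Θ : E → E} {h : E → ℝ} (hΘ0 : Θ 0 = 0)
    (hΘ : ∀ᶠ y in 𝓝 0, ContDiffAt ℝ (⊤ : ℕ∞) Θ y) (hΘ' : (fderiv ℝ Θ 0).IsInvertible)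
    (hh : ∀ᶠ x in 𝓝 0, ContDiffAt ℝ (⊤ : ℕ∞) h x) (hh0 : h 0 ≠ 0)
    (hconj : ∀ᶠ y in 𝓝 0, h (Θ y) • fderiv ℝ Θ y (N y) = V (Θ y)) :
    OrbEquiv Set.univ V N 0 0 := by
  have hne : ((⊤ : ℕ∞) : WithTop ℕ∞) ≠ 0 := by simp
  have hs0 : ContDiffAt ℝ (⊤ : ℕ∞) Θ 0 := hΘ.self_of_nhds
  have hcont : Tendsto Θ (𝓝 0) (𝓝 0) := by simpa [ContinuousAt, hΘ0] using hs0.continuousAt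
  obtain ⟨L, hL⟩ := hΘ'
  have hd0 : HasFDerivAt Θ (L : E →L[ℝ] E) 0 := by
    rw [hL]
    exact (hs0.differentiableAt hne).hasFDerivAt
  set e := hs0.toOpenPartialHomeomorph Θ hd0 hne with he
  have hesrc : (0 : E) ∈ e.source := hs0.mem_toOpenPartialHomeomorph_source hd0 hne
  have hecoe : ∀ y, e y = Θ y := fun _ => rfl
  have hinv : ∀ᶠ y in 𝓝 (0 : E), (fderiv ℝ Θ y).IsInvertible := by
    have hopen : IsOpen {A : E →L[ℝ] E | A.IsInvertible} := ContinuousLinearEquiv.isOpen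
    have hc : ContinuousAt (fderiv ℝ Θ) 0 :=
      (hs0.fderiv_right (m := 0) (by simp)).continuousAt
    exact hc.eventually (hopen.mem_nhds ⟨L, hL⟩)
  have hhne : ∀ᶠ x in 𝓝 (0 : E), h x ≠ 0 := hh.self_of_nhds.continuousAt.eventually_ne hh0
  obtain ⟨W, hW, hWo, hW0⟩ := eventually_nhds_iff.1
    ((hΘ.and hinv).and (((hcont.eventually hh).and (hcont.eventually hhne)).and hconj))
  set e' := e.restrOpen W hWo with he'
  have hsrc : ∀ y ∈ e'.source, y ∈ W := fun y hy => hy.2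
  have h0 : (0 : E) ∈ e'.source := ⟨hesrc, hW0⟩
  have he'0 : e' 0 = 0 := hΘ0
  have hsymm : ∀ x ∈ e'.target, ContDiffAt ℝ (⊤ : ℕ∞) e'.symm x := by
    intro x hx
    obtain ⟨⟨hs, ⟨A, hA⟩⟩, -⟩ := hW _ (hsrc _ (e'.map_target hx))
    refine e'.contDiffAt_symm (f₀' := A) hx ?_ hs
    rw [hA]
    exact (hs.differentiableAt hne).hasFDerivAt
  have hΘsymm : ∀ x ∈ e'.target, Θ (e'.symm x) = x := fun x hx => e'.right_inv hx
  refine ⟨e'.target, e'.source, e'.symm, e', h, e'.open_target, e'.open_source, ?_, h0,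
    Set.subset_univ _, fun x hx => (hsymm x hx).contDiffWithinAt,
    fun y hy => (hW y (hsrc y hy)).1.1.contDiffWithinAt, ?_, e'.mapsTo_symm, e'.mapsTo,
    fun x hx => e'.right_inv hx, fun y hy => e'.left_inv hy, ?_, ?_, ?_⟩
  · simpa [he'0] using e'.map_source h0
  · have := e'.left_inv h0
    rwa [he'0] at this
  · intro x hx
    have := (hW _ (hsrc _ (e'.map_target hx))).2.1.1
    rw [hΘsymm x hx] at this
    exact this.contDiffWithinAt
  · intro x hx
    have := (hW _ (hsrc _ (e'.map_target hx))).2.1.2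
    rwa [hΘsymm x hx] at this
  · intro x hx
    set y := e'.symm x with hy
    have hys : y ∈ e'.source := e'.map_target hx
    obtain ⟨⟨hs, -⟩, -, hc⟩ := hW _ (hsrc _ hys)
    rw [hΘsymm x hx] at hc
    have hcomp : HasFDerivAt (e'.symm ∘ Θ) ((fderiv ℝ e'.symm x).comp (fderiv ℝ Θ y)) y := by
      refine HasFDerivAt.comp y ?_ (hs.differentiableAt hne).hasFDerivAt
      rw [hΘsymm x hx]
      exact ((hsymm x hx).differentiableAt hne).hasFDerivAt
    have hid : (e'.symm ∘ Θ) =ᶠ[𝓝 y] id := by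
      filter_upwards [e'.open_source.mem_nhds hys] with z hz using e'.left_inv hz
    have hDid := hcomp.unique ((hasFDerivAt_id y).congr_of_eventuallyEq hid)
    rw [← hc, map_smul]
    congr 1
    exact congrArg (fun A : E →L[ℝ] E => A (N y)) hDid
theorem hasDerivAt_fst {E F : Type*} [NormedAddCommGroup E] [NormedSpace ℝ E]
    [NormedAddCommGroup F] [NormedSpace ℝ F] {g : ℝ → E × F} {g' : E × F} {t : ℝ}
    (hg : HasDerivAt g g' t) : HasDerivAt (fun τ => (g τ).1) g'.1 t :=
  (ContinuousLinearMap.fst ℝ E F).hasFDerivAt.comp_hasDerivAt t hg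

theorem hasDerivAt_snd {E F : Type*} [NormedAddCommGroup E] [NormedSpace ℝ E]
    [NormedAddCommGroup F] [NormedSpace ℝ F] {g : ℝ → E × F} {g' : E × F} {t : ℝ}
    (hg : HasDerivAt g g' t) : HasDerivAt (fun τ => (g τ).2) g'.2 t :=
  (ContinuousLinearMap.snd ℝ E F).hasFDerivAt.comp_hasDerivAt t hg

/-- If moreover `Φ(0,ζ) ≡ 0` near `0` (and `Ψ₁(0,0) ≠ 0`), the germ of `V` at `0` is
`C^∞`-smoothly orbitally equivalent to `ξ̇ = n·ξ, η̇ = −m·η, ζ̇₁ = ξ^m η^n, ζ̇ᵢ = 0`. -/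
theorem stmt12 (l : ℕ) (hl : 0 < l) (n m : ℕ) (hn : 0 < n) (hm : 0 < m)
    (hcop : Nat.Coprime m n)
    (lam₁ lam₂ : ℝ) (hlam₁ : lam₁ ≠ 0) (hresonance : (m : ℝ) * lam₁ + (n : ℝ) * lam₂ = 0)
    (N₀ : Set (ℝ × (Fin l → ℝ))) (hN₀ : IsOpen N₀) (hN₀0 : (0 : ℝ × (Fin l → ℝ)) ∈ N₀)
    (Φ₁ Φ₂ : (ℝ × (Fin l → ℝ)) → ℝ) (Ψ : Fin l → (ℝ × (Fin l → ℝ)) → ℝ)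
    (hΦ₁ : ContDiffOn ℝ (⊤ : ℕ∞) Φ₁ N₀) (hΦ₂ : ContDiffOn ℝ (⊤ : ℕ∞) Φ₂ N₀)
    (hΨ : ∀ i, ContDiffOn ℝ (⊤ : ℕ∞) (Ψ i) N₀)
    (hΦ₁0 : Φ₁ 0 = 0) (hΦ₂0 : Φ₂ 0 = 0)
    (hΨ₁ : Ψ ⟨0, hl⟩ 0 ≠ 0)
    (Φ : (ℝ × (Fin l → ℝ)) → ℝ) (hΦ : Φ = fun p => (m : ℝ) * Φ₁ p + (n : ℝ) * Φ₂ p)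
    (ρ : (ℝ × ℝ × (Fin l → ℝ)) → ℝ) (hρ : ρ = fun x => x.1 ^ m * x.2.1 ^ n)
    (V : (ℝ × ℝ × (Fin l → ℝ)) → (ℝ × ℝ × (Fin l → ℝ)))
    (hV : V = fun x => (x.1 * (lam₁ + Φ₁ (ρ x, x.2.2)), x.2.1 * (lam₂ + Φ₂ (ρ x, x.2.2)),
      fun i => ρ x * Ψ i (ρ x, x.2.2)))
    -- Φ(0, ζ) = 0 for all ζ in a neighborhood of 0
    (Z : Set (Fin l → ℝ)) (hZ : IsOpen Z) (hZ0 : (0 : Fin l → ℝ) ∈ Z)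
    (hΦflat : ∀ ζ ∈ Z, Φ ((0 : ℝ), ζ) = 0) :
    OrbEquiv Set.univ V
      (fun x : ℝ × ℝ × (Fin l → ℝ) =>
        ((n : ℝ) * x.1, -(m : ℝ) * x.2.1,
          fun i : Fin l => if i = (⟨0, hl⟩ : Fin l) then x.1 ^ m * x.2.1 ^ n else 0)) 0 0 := by
  set j : Fin l := ⟨0, hl⟩
  have hn' : (n : ℝ) ≠ 0 := by exact_mod_cast hn.ne'
  have hne : ((⊤ : ℕ∞) : WithTop ℕ∞) ≠ 0 := by simp
  -- smoothness of the data near the origin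
  have hN₀' : ∀ᶠ q in 𝓝 (0 : ℝ × (Fin l → ℝ)), N₀ ∈ 𝓝 q :=
    eventually_mem_nhds_iff.2 (hN₀.mem_nhds hN₀0)
  have hΦ₁s : ∀ᶠ q in 𝓝 (0 : ℝ × (Fin l → ℝ)), ContDiffAt ℝ (⊤ : ℕ∞) Φ₁ q := by
    filter_upwards [hN₀'] with q hq using hΦ₁.contDiffAt hq
  have hΨs : ∀ᶠ q in 𝓝 (0 : ℝ × (Fin l → ℝ)), ∀ i, ContDiffAt ℝ (⊤ : ℕ∞) (Ψ i) q := by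
    filter_upwards [hN₀'] with q hq i using (hΨ i).contDiffAt hq
  have hΦs : ∀ᶠ q in 𝓝 (0 : ℝ × (Fin l → ℝ)), ContDiffAt ℝ (⊤ : ℕ∞) Φ q := by
    filter_upwards [hN₀'] with q hq
    rw [hΦ]
    exact (contDiffAt_const.mul (hΦ₁.contDiffAt hq)).add
      (contDiffAt_const.mul (hΦ₂.contDiffAt hq))
  -- divisibility of `Φ` by `ρ`
  obtain ⟨χ, hχs, hχ⟩ : ∃ χ : ℝ × (Fin l → ℝ) → ℝ, ContDiff ℝ (⊤ : ℕ∞) χ ∧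
      ∀ᶠ q in 𝓝 (0 : ℝ × (Fin l → ℝ)), Φ q = q.1 * χ q := by
    obtain ⟨g, hg, hgΦ⟩ := exists_contDiff_eventuallyEq hΦs
    obtain ⟨χ, hχs, hχ⟩ := exists_smooth_hadamard_quotient hg
    refine ⟨χ, hχs, ?_⟩
    have hproj : Tendsto (fun q : ℝ × (Fin l → ℝ) => ((0 : ℝ), q.2)) (𝓝 0) (𝓝 0) :=
      Continuous.tendsto' (by fun_prop) _ _ (by simp)
    have hZ' : ∀ᶠ q in 𝓝 (0 : ℝ × (Fin l → ℝ)), q.2 ∈ Z :=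
      continuousAt_snd.eventually (hZ.mem_nhds hZ0)
    filter_upwards [hgΦ, hproj.eventually hgΦ, hZ'] with q hq hq0 hqZ
    rw [← hq, ← Prod.mk.eta (p := q), hχ, hq0, hΦflat _ hqZ, zero_add]
  -- the time change
  set μ : ℝ × (Fin l → ℝ) → ℝ := fun q => lam₁ + Φ₁ q with hμ
  have hμs : ∀ᶠ q in 𝓝 (0 : ℝ × (Fin l → ℝ)), ContDiffAt ℝ (⊤ : ℕ∞) μ q := by
    filter_upwards [hΦ₁s] with q hq using contDiffAt_const.add hq
  have hμ0 : μ 0 = lam₁ := by simp [hμ, hΦ₁0]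
  have hμne : ∀ᶠ q in 𝓝 (0 : ℝ × (Fin l → ℝ)), μ q ≠ 0 :=
    hμs.self_of_nhds.continuousAt.eventually_ne (by rwa [hμ0])
  -- the differential equation for the change of variables
  let Q : (ℝ × (Fin l → ℝ)) × (ℝ × (Fin l → ℝ)) → ℝ × (Fin l → ℝ) := fun x =>
    (x.1.1 * Real.exp (n * x.2.1), x.1.2 + x.2.2)
  have hQs : ContDiff ℝ (⊤ : ℕ∞) Q := by fun_prop
  have hQ0 : Q 0 = 0 := by simp [Q]
  have hQt : Tendsto Q (𝓝 0) (𝓝 0) := hQs.continuous.tendsto' _ _ hQ0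
  let f : (ℝ × (Fin l → ℝ)) × (ℝ × (Fin l → ℝ)) → ℝ × (Fin l → ℝ) := fun x =>
    (Real.exp (n * x.2.1) * (χ (Q x) / μ (Q x)),
      fun i => Real.exp (n * x.2.1) * (n * Ψ i (Q x) / μ (Q x)))
  have hfs : ∀ᶠ x in 𝓝 0, ContDiffAt ℝ (⊤ : ℕ∞) f x := by
    filter_upwards [hQt.eventually hμs, hQt.eventually hμne, hQt.eventually hΨs] with x h1 h2 h3
    have hexp : ContDiffAt ℝ (⊤ : ℕ∞) (fun x : (ℝ × (Fin l → ℝ)) × (ℝ × (Fin l → ℝ)) =>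
      Real.exp (n * x.2.1)) x := by fun_prop
    have hμQ : ContDiffAt ℝ (⊤ : ℕ∞) (fun x => μ (Q x)) x := h1.comp x hQs.contDiffAt
    refine (hexp.mul ((hχs.comp hQs).contDiffAt.div hμQ h2)).prodMk (contDiffAt_pi.2 fun i => ?_)
    exact hexp.mul ((contDiffAt_const.mul ((h3 i).comp x hQs.contDiffAt)).div hμQ h2)
  obtain ⟨φ, hφs, hφ0, hφd⟩ := exists_smooth_solution hfs
  have hφz : φ 0 = 0 := hφ0.self_of_nhds
  -- the change of variables
  let c : (Fin l → ℝ) →L[ℝ] (Fin l → ℝ) :=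
    ContinuousLinearMap.id ℝ _ - (ContinuousLinearMap.proj j).smulRight (Pi.single j (1 : ℝ))
  have hc : ∀ ζ, c ζ = ζ - ζ j • Pi.single j (1 : ℝ) := fun ζ => rfl
  have hρs : ContDiff ℝ (⊤ : ℕ∞) ρ := by rw [hρ]; fun_prop
  have hρ0 : ρ 0 = 0 := by simp [hρ, hm.ne']
  let S : ℝ × ℝ × (Fin l → ℝ) → ℝ × (ℝ × (Fin l → ℝ)) := fun y => (y.2.2 j, (ρ y, c y.2.2))
  have hSs : ContDiff ℝ (⊤ : ℕ∞) S := by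
    have h1 : ContDiff ℝ (⊤ : ℕ∞) fun y : ℝ × ℝ × (Fin l → ℝ) => y.2.2 j := by fun_prop
    have h2 : ContDiff ℝ (⊤ : ℕ∞) fun y : ℝ × ℝ × (Fin l → ℝ) => c y.2.2 := by fun_prop
    exact h1.prodMk (hρs.prodMk h2)
  have hS0 : S 0 = 0 := by simp [S, hρ0]
  have hSt : Tendsto S (𝓝 0) (𝓝 0) := hSs.continuous.tendsto' _ _ hS0
  let Θ : ℝ × ℝ × (Fin l → ℝ) → ℝ × ℝ × (Fin l → ℝ) := fun y =>
    (y.1, y.2.1 * Real.exp (φ (S y)).1, c y.2.2 + (φ (S y)).2)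
  have hΘ0 : Θ 0 = 0 := by simp [Θ, hS0, hφz]
  have hΘs : ∀ᶠ y in 𝓝 0, ContDiffAt ℝ (⊤ : ℕ∞) Θ y := by
    filter_upwards [hSt.eventually hφs] with y hy
    have hw : ContDiffAt ℝ (⊤ : ℕ∞) (fun y => φ (S y)) y := hy.comp y hSs.contDiffAt
    fun_prop
  have hΘt : Tendsto Θ (𝓝 0) (𝓝 0) := by
    simpa [ContinuousAt, hΘ0] using hΘs.self_of_nhds.continuousAt
  let R : ℝ × ℝ × (Fin l → ℝ) → ℝ × (Fin l → ℝ) := fun x => (ρ x, x.2.2)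
  have hRs : ContDiff ℝ (⊤ : ℕ∞) R := hρs.prodMk (by fun_prop)
  have hR0 : R 0 = 0 := by simp [R, hρ0]
  have hRt : Tendsto R (𝓝 0) (𝓝 0) := hRs.continuous.tendsto' _ _ hR0
  have hRΘ : ∀ y, R (Θ y) = Q ((S y).2, φ (S y)) := by
    intro y
    simp only [R, Θ, Q, S, hρ, Prod.mk.injEq, and_true]
    rw [mul_pow, ← Real.exp_nat_mul]
    ring
  refine OrbEquiv.of_inverse (h := fun x => μ (R x) / n) hΘ0 hΘs ?_ ?_ ?_ ?_
  · -- invertibility of the derivative at the origin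
    have hdΘ : HasFDerivAt Θ (fderiv ℝ Θ 0) 0 :=
      (hΘs.self_of_nhds.differentiableAt hne).hasFDerivAt
    have hdφ : HasFDerivAt φ (fderiv ℝ φ 0) 0 :=
      (hφs.self_of_nhds.differentiableAt hne).hasFDerivAt
    have hφt : ∀ t : ℝ, ∀ p, fderiv ℝ φ 0 (t, p) = t • f 0 := by
      intro t p
      have h1 : fderiv ℝ φ 0 ((1 : ℝ), 0) = f 0 := by
        have ha : HasDerivAt (fun t : ℝ => (t, (0 : ℝ × (Fin l → ℝ)))) (1, 0) 0 :=
          (hasDerivAt_id 0).prodMk (hasDerivAt_const _ _)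
        have hb := HasFDerivAt.comp_hasDerivAt (f := fun t : ℝ => (t, (0 : ℝ × (Fin l → ℝ))))
          (0 : ℝ) hdφ ha
        have hd : HasDerivAt (fun t => φ (t, 0)) (f (0, φ 0)) 0 := hφd.self_of_nhds
        rw [hφz] at hd
        exact hb.unique hd
      have h2 : fderiv ℝ φ 0 (0, p) = 0 := by
        have ha : HasFDerivAt (fun p => φ (0, p))
            (fderiv ℝ φ 0 ∘L .inr ℝ ℝ (ℝ × (Fin l → ℝ))) 0 :=
          HasFDerivAt.comp (f := fun p : ℝ × (Fin l → ℝ) => ((0 : ℝ), p)) 0 hdφ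
            (hasFDerivAt_prodMk_right (0 : ℝ) 0)
        have hb := ha.unique ((hasFDerivAt_const (0 : ℝ × (Fin l → ℝ)) 0).congr_of_eventuallyEq hφ0)
        exact congrArg (fun A : (ℝ × (Fin l → ℝ)) →L[ℝ] ℝ × (Fin l → ℝ) => A p) hb
      have h3 : ((t, p) : ℝ × ℝ × (Fin l → ℝ)) = t • ((1 : ℝ), 0) + (0, p) := by simp
      rw [h3, map_add, map_smul, h1, h2, add_zero]
    have hinj : Function.Injective (fderiv ℝ Θ 0) := by
      refine (injective_iff_map_eq_zero _).2 fun v hv => ?_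
      have hline : HasDerivAt (fun τ : ℝ => τ • v) v 0 := by
        simpa using (hasDerivAt_id (0 : ℝ)).smul_const v
      have hcomp : HasDerivAt (fun τ : ℝ => Θ (τ • v)) 0 0 := by
        rw [← hv]
        have h : HasFDerivAt Θ (fderiv ℝ Θ 0) ((0 : ℝ) • v) := by simpa using hdΘ
        exact h.comp_hasDerivAt (0 : ℝ) hline
      have hρline : HasDerivAt (fun τ : ℝ => ρ (τ • v)) 0 0 := by
        have h1 : HasDerivAt (fun τ : ℝ => τ ^ (m + n) * (v.1 ^ m * v.2.1 ^ n)) 0 0 := by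
          have := (hasDerivAt_pow (m + n) (0 : ℝ)).mul_const (v.1 ^ m * v.2.1 ^ n)
          rwa [zero_pow (by omega), mul_zero, zero_mul] at this
        refine h1.congr_of_eventuallyEq (Eventually.of_forall fun τ => ?_)
        simp only [hρ, Prod.smul_fst, Prod.smul_snd, smul_eq_mul]
        ring
      have hcline : HasDerivAt (fun τ : ℝ => c (τ • v).2.2) (c v.2.2) 0 := by
        simpa using (hasDerivAt_id (0 : ℝ)).smul_const (c v.2.2)
      have hSline : HasDerivAt (fun τ : ℝ => S (τ • v)) (v.2.2 j, (0, c v.2.2)) 0 := by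
        refine HasDerivAt.prodMk ?_ (hρline.prodMk hcline)
        simpa using (hasDerivAt_id (0 : ℝ)).mul_const (v.2.2 j)
      have hφline : HasDerivAt (fun τ : ℝ => φ (S (τ • v))) (v.2.2 j • f 0) 0 := by
        rw [← hφt _ (0, c v.2.2)]
        have h : HasFDerivAt φ (fderiv ℝ φ 0) (S ((0 : ℝ) • v)) := by simpa [hS0] using hdφ
        exact h.comp_hasDerivAt (0 : ℝ) hSline
      have e1 : v.1 = 0 := by
        have h1 : HasDerivAt (fun τ : ℝ => τ * v.1) v.1 0 := by
          simpa using (hasDerivAt_id (0 : ℝ)).mul_const v.1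
        exact h1.unique (hasDerivAt_fst hcomp)
      have e2 : v.2.1 = 0 := by
        have h1 : HasDerivAt (fun τ : ℝ => τ * v.2.1) v.2.1 0 := by
          simpa using (hasDerivAt_id (0 : ℝ)).mul_const v.2.1
        have h2 := h1.mul (hasDerivAt_fst hφline).exp
        have h3 := h2.unique (hasDerivAt_fst (hasDerivAt_snd hcomp))
        simpa [hS0, hφz] using h3
      have e3 : c v.2.2 + v.2.2 j • (f 0).2 = 0 :=
        (hcline.add (hasDerivAt_snd hφline)).unique (hasDerivAt_snd (hasDerivAt_snd hcomp))
      have hf0 : (f 0).2 j ≠ 0 := by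
        have : (f 0).2 j = n * Ψ j 0 / lam₁ := by simp [f, hQ0, hμ0]
        rw [this]
        exact div_ne_zero (mul_ne_zero hn' hΨ₁) hlam₁
      have e4 : v.2.2 j = 0 := by
        have h1 := congrFun e3 j
        simpa [hc, hf0] using h1
      have e5 : v.2.2 = 0 := by simpa [hc, e4] using e3
      exact Prod.ext e1 (Prod.ext e2 e5)
    exact ⟨(LinearEquiv.ofInjectiveEndo (fderiv ℝ Θ 0).toLinearMap hinj).toContinuousLinearEquiv,
      rfl⟩
  · filter_upwards [hRt.eventually hμs] with x hx
    exact (hx.comp x hRs.contDiffAt).div_const _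
  · simpa [hR0, hμ0] using ⟨hlam₁, hn.ne'⟩
  · -- the conjugacy equation, checked along the integral curves of the normal form
    have hRΘt : Tendsto (fun y => R (Θ y)) (𝓝 0) (𝓝 0) := hRt.comp hΘt
    filter_upwards [hΘs, hSt.eventually hφd, hRΘt.eventually hμne, hRΘt.eventually hχ]
      with y hy hyd hyμ hyχ
    let γ : ℝ → ℝ × ℝ × (Fin l → ℝ) := fun τ =>
      (y.1 * Real.exp (n * τ), y.2.1 * Real.exp (-m * τ),
        y.2.2 + (τ * ρ y) • Pi.single j (1 : ℝ))
    have hγ0 : γ 0 = y := by simp [γ]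
    have hexp : ∀ a : ℝ, HasDerivAt (fun τ : ℝ => Real.exp (a * τ)) a 0 := fun a => by
      simpa using ((hasDerivAt_id (0 : ℝ)).const_mul a).exp
    have hγd : HasDerivAt γ (n * y.1, -m * y.2.1, ρ y • Pi.single j (1 : ℝ)) 0 := by
      rw [mul_comm (n : ℝ), mul_comm (-m : ℝ)]
      refine ((hexp n).const_mul y.1).prodMk (((hexp (-m)).const_mul y.2.1).prodMk ?_)
      simpa using (((hasDerivAt_id (0 : ℝ)).mul_const (ρ y)).smul_const
        (Pi.single j (1 : ℝ) : Fin l → ℝ)).const_add y.2.2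
    have hργ : ∀ τ, ρ (γ τ) = ρ y := by
      intro τ
      have h1 : Real.exp (n * τ) ^ m * Real.exp (-m * τ) ^ n = 1 := by
        rw [← Real.exp_nat_mul, ← Real.exp_nat_mul, ← Real.exp_add, Real.exp_eq_one_iff]
        ring
      simp only [hρ, γ, mul_pow]
      linear_combination y.1 ^ m * y.2.1 ^ n * h1
    have hcγ : ∀ τ, c (γ τ).2.2 = c y.2.2 := by
      intro τ
      have h1 : c (Pi.single j (1 : ℝ)) = 0 := by simp [hc]
      simp only [γ, map_add, map_smul, h1, smul_zero, add_zero]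
    have hSγ : ∀ τ, S (γ τ) = (y.2.2 j + τ * ρ y, (S y).2) := by
      intro τ
      simp only [S, hργ, hcγ]
      simp [γ]
    have hφγ : HasDerivAt (fun τ => φ (S (γ τ))) (ρ y • f ((S y).2, φ (S y))) 0 := by
      simp only [hSγ]
      have h1 : HasDerivAt (fun τ : ℝ => y.2.2 j + τ * ρ y) (ρ y) 0 := by
        simpa using ((hasDerivAt_id (0 : ℝ)).mul_const (ρ y)).const_add (y.2.2 j)
      have h2 : HasDerivAt (fun t => φ (t, (S y).2)) (f ((S y).2, φ (S y)))
          (y.2.2 j + 0 * ρ y) := by simpa [S] using hyd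
      exact h2.scomp (0 : ℝ) h1
    have hΘγ : HasDerivAt (fun τ => Θ (γ τ))
        (fderiv ℝ Θ y (n * y.1, -m * y.2.1, ρ y • Pi.single j (1 : ℝ))) 0 := by
      have h : HasFDerivAt Θ (fderiv ℝ Θ y) (γ 0) := by
        rw [hγ0]
        exact (hy.differentiableAt hne).hasFDerivAt
      exact h.comp_hasDerivAt (0 : ℝ) hγd
    have hN : (fun i : Fin l => if i = j then y.1 ^ m * y.2.1 ^ n else 0) =
        ρ y • Pi.single j (1 : ℝ) := by
      ext i
      simp [Pi.single_apply, hρ]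
    have hΘγ₂ := ((hasDerivAt_fst (hasDerivAt_snd hγd)).mul (hasDerivAt_fst hφγ).exp).unique
      (hasDerivAt_fst (hasDerivAt_snd hΘγ))
    have hΘγ₁ := (hasDerivAt_fst hγd).unique (hasDerivAt_fst (g := fun τ => Θ (γ τ)) hΘγ)
    have hΘγ₃ : ρ y • (f ((S y).2, φ (S y))).2 =
        (fderiv ℝ Θ y (n * y.1, -m * y.2.1, ρ y • Pi.single j (1 : ℝ))).2.2 := by
      have h1 := (hasDerivAt_snd hφγ).const_add (c y.2.2)
      have h2 := hasDerivAt_snd (hasDerivAt_snd hΘγ)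
      simp only [Θ, hcγ] at h2
      exact h1.unique h2
    rw [hγ0] at hΘγ₂
    have hq : (R (Θ y)).1 = ρ y * Real.exp (n * (φ (S y)).1) := by rw [hRΘ]
    have hVΘ : V (Θ y) = (y.1 * μ (R (Θ y)),
        y.2.1 * Real.exp (φ (S y)).1 * (lam₂ + Φ₂ (R (Θ y))),
        fun i => (R (Θ y)).1 * Ψ i (R (Θ y))) := by rw [hV]
    have hμq : μ (R (Θ y)) = lam₁ + Φ₁ (R (Θ y)) := rfl
    rw [hN, hVΘ]
    simp only [f, ← hRΘ, Prod.smul_mk, smul_eq_mul] at hΘγ₂ hΘγ₃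
    simp only [hΦ, hq] at hyχ
    refine Prod.ext ?_ (Prod.ext ?_ ?_)
    · simp only [Prod.smul_fst, ← hΘγ₁, smul_eq_mul]
      field_simp
    · simp only [Prod.smul_fst, Prod.smul_snd, ← hΘγ₂, smul_eq_mul]
      generalize μ (R (Θ y)) = a at *
      field_simp
      linear_combination y.2.1 * (-m * hμq - hyχ - hresonance)
    · simp only [Prod.smul_snd, ← hΘγ₃]
      ext i
      simp only [Pi.smul_apply, smul_eq_mul, hq]
      field_simp
end

section
/- Assume Conditions (A) and (B) hold, r ∉ {0, 1}, the point 0 lies in Γ, the singular set W^c = {ξ = η = 0} of V is contained in Γ in a neighborhood of 0, and the complex eigenvalues of the Jacobian of V at 0 are λ₁, λ₂ together with 0 of multiplicity l, where λ₁ is real and nonzero. Then λ₂ is also real and nonzero, λ₁ + λ₂ ≠ 0, and either λ₂ = (r − 1)·λ₁ or λ₁ = (r − 1)·λ₂; equivalently, the spectrum of the linearization of V at 0 is σ·(1, r − 1, 0, …, 0) for some real σ ≠ 0. -/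
open Filter Topology

/-- Partial derivative of `g : ℝⁿ → ℝ` in the `i`-th coordinate direction. -/
noncomputable def pderiv' {n : ℕ} (g : (Fin n → ℝ) → ℝ) (i : Fin n) (x : Fin n → ℝ) : ℝ :=
  fderiv ℝ g x (Pi.single i 1)

/-- Divergence of a vector field on ℝⁿ. -/
noncomputable def diverg {n : ℕ} (V : (Fin n → ℝ) → (Fin n → ℝ)) (x : Fin n → ℝ) : ℝ :=
  ∑ i, pderiv' (fun y => V y i) i x

/-- Gradient of `g : ℝⁿ → ℝ`. -/
noncomputable def grad' {n : ℕ} (g : (Fin n → ℝ) → ℝ) (x : Fin n → ℝ) : Fin n → ℝ :=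
  fun i => pderiv' g i x

/-- The Euclidean inner product on ℝⁿ. -/
noncomputable def dotp {n : ℕ} (u w : Fin n → ℝ) : ℝ := ∑ i, u i * w i

/-- Condition (A): for every `x* ∈ Γ`, `|f x|^(r+1) · div W x → 0` as `x → x*`
with `x ∈ Ω \ Γ`. -/
def CondA {n : ℕ} (Ω Γ : Set (Fin n → ℝ)) (f : (Fin n → ℝ) → ℝ) (r : ℝ)
    (W : (Fin n → ℝ) → (Fin n → ℝ)) : Prop :=
  ∀ xs ∈ Γ, Filter.Tendsto (fun x => |f x| ^ (r + 1) * diverg W x)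
    (nhdsWithin xs (Ω \ Γ)) (nhds 0)

/-- Condition (B): for every `x* ∈ Γ` with `V x* = 0`, one has
`|f x|^r · div W x → 0` and `|f x|^(r+1) · ∂(div W)/∂x_i x → 0` as `x → x*`
with `x ∈ Ω \ Γ`, for each `i`. -/
def CondB {n : ℕ} (Ω Γ : Set (Fin n → ℝ)) (f : (Fin n → ℝ) → ℝ) (r : ℝ)
    (V W : (Fin n → ℝ) → (Fin n → ℝ)) : Prop :=
  ∀ xs ∈ Γ, V xs = 0 →
    Filter.Tendsto (fun x => |f x| ^ r * diverg W x) (nhdsWithin xs (Ω \ Γ)) (nhds 0) ∧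
    ∀ i : Fin n, Filter.Tendsto (fun x => |f x| ^ (r + 1) * pderiv' (diverg W) i x)
      (nhdsWithin xs (Ω \ Γ)) (nhds 0)

theorem fderiv_apply_eq_sum_pderiv' {n : ℕ} (g : (Fin n → ℝ) → ℝ) (x u : Fin n → ℝ) :
    fderiv ℝ g x u = ∑ i, u i * pderiv' g i x := by
  conv_lhs => rw [← Finset.univ_sum_single u, map_sum]
  refine Finset.sum_congr rfl fun i _ => ?_
  rw [pderiv', ← smul_eq_mul, ← map_smul, ← Pi.single_smul, smul_eq_mul, mul_one]

theorem hasDerivAt_abs_rpow_neg {t : ℝ} (ht : t ≠ 0) (r : ℝ) :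
    HasDerivAt (fun s : ℝ => |s| ^ (-r)) (-r * |t| ^ (-r) / t) t := by
  have h := (hasDerivAt_abs ht).rpow_const (p := -r) (Or.inl (abs_ne_zero.mpr ht))
  convert h using 1
  rw [Real.rpow_sub_one (abs_ne_zero.mpr ht)]
  rcases ht.lt_or_gt with h | h
  · simp [abs_of_neg h, sign_neg h]; field_simp
  · simp [abs_of_pos h, sign_pos h]; field_simp

/-- The divergence of a rescaled vector field `|f|^(-r) V` off the zero set of `f`. -/
theorem abs_rpow_mul_diverg {n : ℕ} {f : (Fin n → ℝ) → ℝ} {V W : (Fin n → ℝ) → (Fin n → ℝ)}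
    {r : ℝ} {x : Fin n → ℝ} (hf : DifferentiableAt ℝ f x) (hV : DifferentiableAt ℝ V x)
    (hfx : f x ≠ 0) (hW : W =ᶠ[𝓝 x] fun y => |f y| ^ (-r) • V y) :
    |f x| ^ r * diverg W x = diverg V x - r * (fderiv ℝ f x (V x) / f x) := by
  have hVi : ∀ i, DifferentiableAt ℝ (fun y => V y i) x := differentiableAt_pi.mp hV
  have key : ∀ i, pderiv' (fun y => W y i) i x =
      |f x| ^ (-r) * (pderiv' (fun y => V y i) i x - r * (V x i * pderiv' f i x / f x)) := by
    intro i
    have h1 : (fun y => W y i) =ᶠ[𝓝 x] fun y => |f y| ^ (-r) * V y i := by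
      filter_upwards [hW] with y hy
      simp [hy]
    have h2 := ((hasDerivAt_abs_rpow_neg hfx r).comp_hasFDerivAt x hf.hasFDerivAt).mul
      (hVi i).hasFDerivAt
    have h3 : fderiv ℝ (fun y => W y i) x = _ := h1.fderiv_eq.trans h2.fderiv
    simp only [pderiv', h3]
    simp
    ring
  have hpos : 0 < |f x| := abs_pos.mpr hfx
  rw [diverg, Finset.sum_congr rfl fun i _ => key i, ← Finset.mul_sum, ← mul_assoc,
    ← Real.rpow_add hpos, add_neg_cancel, Real.rpow_zero, one_mul, Finset.sum_sub_distrib,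
    ← Finset.mul_sum, ← Finset.sum_div, ← fderiv_apply_eq_sum_pderiv']
  rfl

/-- At a zero `p` of `V` on a regular level set `{f = 0}`, if `|f|^r div (|f|^(-r) V)` tends to
zero then `df` is a left eigenvector of `dV`, with eigenvalue `div V / r`. -/
theorem mul_fderiv_fderiv_eq_diverg_mul {n : ℕ} {Ω : Set (Fin n → ℝ)} (hΩ : IsOpen Ω)
    {f : (Fin n → ℝ) → ℝ} (hf : ContDiffOn ℝ (⊤ : ℕ∞) f Ω)
    {V W : (Fin n → ℝ) → (Fin n → ℝ)} (hV : ContDiffOn ℝ (⊤ : ℕ∞) V Ω) {r : ℝ}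
    (hW : ∀ x ∈ Ω, f x ≠ 0 → W x = |f x| ^ (-r) • V x)
    {p : Fin n → ℝ} (hp : p ∈ Ω) (hfp : f p = 0) (hVp : V p = 0) (hreg : fderiv ℝ f p ≠ 0)
    (hlim : Tendsto (fun x => |f x| ^ r * diverg W x) (𝓝[{x ∈ Ω | f x ≠ 0}] p) (𝓝 0))
    (e : Fin n → ℝ) :
    r * fderiv ℝ f p (fderiv ℝ V p e) = diverg V p * fderiv ℝ f p e := by
  have hΩn : ∀ {x}, x ∈ Ω → Ω ∈ 𝓝 x := fun hx => hΩ.mem_nhds hx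
  have hfd : ∀ {x}, x ∈ Ω → DifferentiableAt ℝ f x := fun hx =>
    (hf.contDiffAt (hΩn hx)).differentiableAt (by simp)
  have hVd : ∀ {x}, x ∈ Ω → DifferentiableAt ℝ V x := fun hx =>
    (hV.contDiffAt (hΩn hx)).differentiableAt (by simp)
  have hdf : ContinuousAt (fderiv ℝ f) p :=
    (hf.continuousOn_fderiv_of_isOpen hΩ (by simp)).continuousAt (hΩn hp)
  have hdiv : ContinuousAt (diverg V) p := by
    have h : ∀ i, ContinuousAt (fun x => pderiv' (fun y => V y i) i x) p := fun i =>
      (((contDiffOn_pi.mp hV i).continuousOn_fderiv_of_isOpen hΩ (by simp)).continuousAt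
        (hΩn hp)).clm_apply continuousAt_const
    exact tendsto_finsetSum _ fun i _ => h i
  have transversal : ∀ e, fderiv ℝ f p e ≠ 0 →
      r * fderiv ℝ f p (fderiv ℝ V p e) = diverg V p * fderiv ℝ f p e := by
    intro e he
    have hline : Tendsto (fun t : ℝ => p + t • e) (𝓝[≠] 0) (𝓝 p) := by
      have : ContinuousAt (fun t : ℝ => p + t • e) 0 := by fun_prop
      simpa [ContinuousAt] using this.tendsto.mono_left (nhdsWithin_le_nhds (s := {0}ᶜ))
    have hfs : Tendsto (fun t : ℝ => t⁻¹ * f (p + t • e)) (𝓝[≠] 0) (𝓝 (fderiv ℝ f p e)) := by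
      simpa [hfp] using ((hfd hp).hasFDerivAt.hasLineDerivAt e).tendsto_slope_zero
    have hVs : Tendsto (fun t : ℝ => t⁻¹ • V (p + t • e)) (𝓝[≠] 0) (𝓝 (fderiv ℝ V p e)) := by
      simpa [hVp] using ((hVd hp).hasFDerivAt.hasLineDerivAt e).tendsto_slope_zero
    have hΩe : ∀ᶠ t : ℝ in 𝓝[≠] 0, p + t • e ∈ Ω := hline (hΩn hp)
    have hfe : ∀ᶠ t : ℝ in 𝓝[≠] 0, f (p + t • e) ≠ 0 := by
      filter_upwards [hfs.eventually_ne he] with t ht h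
      simp [h] at ht
    have hdfV : Tendsto (fun t : ℝ => fderiv ℝ f (p + t • e) (t⁻¹ • V (p + t • e))) (𝓝[≠] 0)
        (𝓝 (fderiv ℝ f p (fderiv ℝ V p e))) :=
      (isBoundedBilinearMap_apply.continuous.tendsto (fderiv ℝ f p, fderiv ℝ V p e)).comp
        ((hdf.tendsto.comp hline).prodMk_nhds hVs)
    have hL : Tendsto (fun t : ℝ => diverg V (p + t • e) -
        r * (fderiv ℝ f (p + t • e) (t⁻¹ • V (p + t • e)) / (t⁻¹ * f (p + t • e)))) (𝓝[≠] 0)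
        (𝓝 (diverg V p - r * (fderiv ℝ f p (fderiv ℝ V p e) / fderiv ℝ f p e))) :=
      (hdiv.tendsto.comp hline).sub
        ((hdfV.div hfs he).const_mul r)
    have hZ := hlim.comp (tendsto_nhdsWithin_iff.mpr ⟨hline, hΩe.and hfe⟩)
    have hEq := tendsto_nhds_unique (hZ.congr' ?_) hL
    · field_simp at hEq
      linarith
    · filter_upwards [hΩe, hfe, self_mem_nhdsWithin] with t ht hft ht0
      have ht0 : t ≠ 0 := ht0
      have hnear : W =ᶠ[𝓝 (p + t • e)] fun y => |f y| ^ (-r) • V y := by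
        filter_upwards [hΩn ht, (hfd ht).continuousAt.eventually_ne hft] with y hy hfy
        exact hW y hy hfy
      rw [Function.comp_apply, abs_rpow_mul_diverg (hfd ht) (hVd ht) hft hnear, map_smul,
        smul_eq_mul, mul_div_mul_left _ _ (inv_ne_zero ht0)]
  by_cases he : fderiv ℝ f p e = 0
  · obtain ⟨u, hu⟩ : ∃ u, fderiv ℝ f p u ≠ 0 := by
      by_contra! h
      exact hreg (ContinuousLinearMap.ext h)
    have h1 := transversal u hu
    have h2 := transversal (e + u) (by simpa [he] using hu)
    simp only [map_add] at h2
    linarith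
  · exact transversal e he

theorem eigenvalue_eq_zero_of_trace_eq_zero {a b c d s t n₀ n₁ μ : ℝ} (h₀ : a * s + b * t = μ * s)
    (h₁ : c * s + d * t = μ * t) (htr : a + d = 0) (hn₀ : n₀ * a + n₁ * c = 0)
    (hn₁ : n₀ * b + n₁ * d = 0) (hn : ¬(n₀ = 0 ∧ n₁ = 0)) (hst : ¬(s = 0 ∧ t = 0)) : μ = 0 := by
  have hdet : a * d - b * c = 0 := by
    by_contra h
    refine hn ⟨?_, ?_⟩
    · refine (mul_eq_zero.mp (?_ : (a * d - b * c) * n₀ = 0)).resolve_left h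
      linear_combination d * hn₀ - c * hn₁
    · refine (mul_eq_zero.mp (?_ : (a * d - b * c) * n₁ = 0)).resolve_left h
      linear_combination a * hn₁ - b * hn₀
  by_contra hμ
  have hμ2 : μ ^ 2 ≠ 0 := pow_ne_zero 2 hμ
  refine hst ⟨?_, ?_⟩
  · refine (mul_eq_zero.mp (?_ : μ ^ 2 * s = 0)).resolve_left hμ2
    linear_combination (-a - μ) * h₀ - b * h₁ + (a * s + b * t) * htr - s * hdet
  · refine (mul_eq_zero.mp (?_ : μ ^ 2 * t = 0)).resolve_left hμ2
    linear_combination (-d - μ) * h₁ - c * h₀ + (c * s + d * t) * htr - t * hdet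

theorem charpoly_isRoot_of_vecMul_eq {n : ℕ} {A : Matrix (Fin n) (Fin n) ℝ} {u : Fin n → ℝ}
    (hu : u ≠ 0) {μ : ℝ} (h : Matrix.vecMul u A = μ • u) : A.charpoly.IsRoot μ := by
  rw [Polynomial.IsRoot, Matrix.eval_charpoly]
  refine Matrix.exists_vecMul_eq_zero_iff.mp ⟨u, hu, ?_⟩
  simp [Matrix.vecMul_sub, h, Matrix.scalar_apply]

theorem exists_mulVec_eq_of_charpoly_isRoot {n : ℕ} {A : Matrix (Fin n) (Fin n) ℝ} {μ : ℝ}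
    (h : A.charpoly.IsRoot μ) : ∃ u ≠ 0, A.mulVec u = μ • u := by
  rw [Polynomial.IsRoot, Matrix.eval_charpoly] at h
  obtain ⟨u, hu, h⟩ := Matrix.exists_mulVec_eq_zero_iff.mpr h
  refine ⟨u, hu, ?_⟩
  rw [Matrix.sub_mulVec, sub_eq_zero] at h
  rw [← h]
  ext i; simp [Matrix.scalar_apply, Matrix.mulVec_diagonal]

theorem fderiv_apply_eq_zero_of_eqOn_subspace {E F : Type*} [NormedAddCommGroup E]
    [NormedSpace ℝ E] [NormedAddCommGroup F] [NormedSpace ℝ F] {g : E → F} {U : Set E}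
    (hU : U ∈ 𝓝 0) (hg : DifferentiableAt ℝ g 0) (S : Submodule ℝ E)
    (hgS : ∀ x ∈ U, x ∈ S → g x = 0) {e : E} (he : e ∈ S) : fderiv ℝ g 0 e = 0 := by
  have hline : Tendsto (fun t : ℝ => (0 : E) + t • e) (𝓝 0) (𝓝 0) := by
    have : ContinuousAt (fun t : ℝ => (0 : E) + t • e) 0 := by fun_prop
    simpa [ContinuousAt] using this
  have h1 : HasDerivAt (fun t : ℝ => g (0 + t • e)) (fderiv ℝ g 0 e) 0 :=
    hg.hasFDerivAt.hasLineDerivAt e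
  have h2 : (fun t : ℝ => g (0 + t • e)) =ᶠ[𝓝 0] fun _ => 0 := by
    filter_upwards [hline hU] with t ht
    exact hgS _ ht (by simpa using S.smul_mem t he)
  exact h1.unique ((hasDerivAt_const (0 : ℝ) (0 : F)).congr_of_eventuallyEq h2)

/-- Assume Conditions (A) and (B), `r ∉ {0,1}`, `0 ∈ Γ`, the singular set
`W^c = {ξ = η = 0}` of `V` is contained in `Γ` near `0`, and the complex eigenvalues of
the Jacobian of `V` at `0` are `λ₁, λ₂` together with `0` of multiplicity `l`, where `λ₁`
is real and nonzero. Then `λ₂` is real and nonzero, `λ₁ + λ₂ ≠ 0`, and either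
`λ₂ = (r−1)·λ₁` or `λ₁ = (r−1)·λ₂`. -/
theorem stmt13 (l : ℕ) (Ω Γ : Set (Fin (l + 2) → ℝ)) (hΩ : IsOpen Ω)
    (h0Ω : (0 : Fin (l + 2) → ℝ) ∈ Ω)
    (f : (Fin (l + 2) → ℝ) → ℝ) (hf : ContDiffOn ℝ (⊤ : ℕ∞) f Ω)
    (hΓ : Γ = {x | x ∈ Ω ∧ f x = 0}) (hΓne : Γ.Nonempty)
    (hreg : ∀ x ∈ Γ, grad' f x ≠ 0)
    -- V has the form ξ̇ = v, η̇ = w, ζ̇ᵢ = αᵢ v + βᵢ w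
    (V : (Fin (l + 2) → ℝ) → (Fin (l + 2) → ℝ))
    (v w : (Fin (l + 2) → ℝ) → ℝ) (α β : Fin l → (Fin (l + 2) → ℝ) → ℝ)
    (hvs : ContDiffOn ℝ (⊤ : ℕ∞) v Ω) (hws : ContDiffOn ℝ (⊤ : ℕ∞) w Ω)
    (hαs : ∀ i, ContDiffOn ℝ (⊤ : ℕ∞) (α i) Ω) (hβs : ∀ i, ContDiffOn ℝ (⊤ : ℕ∞) (β i) Ω)
    (hV0 : ∀ x, V x 0 = v x) (hV1 : ∀ x, V x 1 = w x)
    (hVi : ∀ x, ∀ i : Fin l, V x i.succ.succ = α i x * v x + β i x * w x)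
    -- near 0, v and w vanish exactly on W^c = {ξ = η = 0}
    (U₀ : Set (Fin (l + 2) → ℝ)) (hU₀ : IsOpen U₀) (h0U₀ : (0 : Fin (l + 2) → ℝ) ∈ U₀)
    (hU₀Ω : U₀ ⊆ Ω)
    (hWc : ∀ x ∈ U₀, (v x = 0 ∧ w x = 0) ↔ (x 0 = 0 ∧ x 1 = 0))
    -- W = |f|^{−r} V and Conditions (A), (B)
    (r : ℝ) (hr0 : r ≠ 0) (hr1 : r ≠ 1)
    (W : (Fin (l + 2) → ℝ) → (Fin (l + 2) → ℝ))
    (hW : ∀ x ∈ Ω \ Γ, W x = |f x| ^ (-r) • V x)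
    (hA : CondA Ω Γ f r W) (hB : CondB Ω Γ f r V W)
    -- 0 ∈ Γ and W^c ⊆ Γ in a neighborhood of 0
    (h0Γ : (0 : Fin (l + 2) → ℝ) ∈ Γ)
    (hWcΓ : ∀ x ∈ U₀, (x 0 = 0 ∧ x 1 = 0) → x ∈ Γ)
    -- the complex eigenvalues of the Jacobian of V at 0 are λ₁, λ₂ and 0 (multiplicity l)
    (J : Matrix (Fin (l + 2)) (Fin (l + 2)) ℝ)
    (hJ : J = Matrix.of fun i j => pderiv' (fun y => V y i) j 0)
    (lam₁ : ℝ) (lam₂ : ℂ) (hlam₁ : lam₁ ≠ 0)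
    (hchar : (J.map (fun t => (t : ℂ))).charpoly =
      Polynomial.X ^ l * (Polynomial.X - Polynomial.C (lam₁ : ℂ)) *
        (Polynomial.X - Polynomial.C lam₂)) :
    lam₂.im = 0 ∧ lam₂ ≠ 0 ∧ (lam₁ : ℂ) + lam₂ ≠ 0 ∧
      (lam₂ = ((r : ℂ) - 1) * (lam₁ : ℂ) ∨ (lam₁ : ℂ) = ((r : ℂ) - 1) * lam₂) := by
  have h0Ωn : Ω ∈ 𝓝 0 := hΩ.mem_nhds h0Ω
  have hU₀n : U₀ ∈ 𝓝 0 := hU₀.mem_nhds h0U₀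
  have hVs : ContDiffOn ℝ (⊤ : ℕ∞) V Ω := by
    refine contDiffOn_pi.mpr fun i => ?_
    refine Fin.cases ?_ (fun i => Fin.cases ?_ (fun i => ?_) i) i
    · simpa only [hV0] using hvs
    · simpa only [Fin.succ_zero_eq_one, hV1] using hws
    · simpa only [hVi] using ((hαs i).mul hvs).add ((hβs i).mul hws)
  have hfd : DifferentiableAt ℝ f 0 := (hf.contDiffAt h0Ωn).differentiableAt (by simp)
  have hVd : DifferentiableAt ℝ V 0 := (hVs.contDiffAt h0Ωn).differentiableAt (by simp)
  have hVWc : ∀ x ∈ U₀, x 0 = 0 ∧ x 1 = 0 → V x = 0 := by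
    intro x hx hx0
    obtain ⟨hv, hw⟩ := (hWc x hx).mpr hx0
    ext i
    refine Fin.cases ?_ (fun i => Fin.cases ?_ (fun i => ?_) i) i
    · simp [hV0, hv]
    · simp [hV1, hw]
    · simp [hVi, hv, hw]
  have hV00 : V 0 = 0 := hVWc 0 h0U₀ (by simp)
  have hf0 : f 0 = 0 := by
    rw [hΓ] at h0Γ
    exact h0Γ.2
  have hΩΓ : Ω \ Γ = {x ∈ Ω | f x ≠ 0} := by
    ext x
    simp only [hΓ, Set.mem_sdiff, Set.mem_ofPred_eq]
    tauto
  set n := grad' f 0 with hn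
  have hn0 : n ≠ 0 := hreg 0 h0Γ
  have hdf : ∀ u, fderiv ℝ f 0 u = ∑ i, u i * n i := fderiv_apply_eq_sum_pderiv' f 0
  have hdf0 : fderiv ℝ f 0 ≠ 0 := by
    intro h
    refine hn0 (funext fun i => ?_)
    simp [hn, grad', pderiv', h]
  have hJa : ∀ i j, J i j = fderiv ℝ V 0 (Pi.single j 1) i := by
    intro i j
    rw [hJ, Matrix.of_apply, pderiv', fderiv_apply hVd]
    rfl
  have htr : J.trace = diverg V 0 := by
    simp [hJ, Matrix.trace, diverg]
  -- `∇f(0)` is a left eigenvector of the Jacobian.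
  have hleft : Matrix.vecMul n J = (J.trace / r) • n := by
    ext j
    have h := mul_fderiv_fderiv_eq_diverg_mul hΩ hf hVs (W := W) (r := r)
      (fun x hx hfx => hW x (hΩΓ ▸ ⟨hx, hfx⟩)) h0Ω hf0 hV00 hdf0
      (hΩΓ ▸ (hB 0 h0Γ hV00).1) (Pi.single j 1)
    have h1 : Matrix.vecMul n J j = fderiv ℝ f 0 (fderiv ℝ V 0 (Pi.single j 1)) := by
      rw [hdf]
      simp [Matrix.vecMul, dotProduct, hJa, mul_comm]
    have h2 : n j = fderiv ℝ f 0 (Pi.single j 1) := rfl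
    rw [h1, Pi.smul_apply, h2, htr, smul_eq_mul]
    field_simp
    linarith
  -- Vectors tangent to `W^c` are killed by `df` and `dV`.
  let S : Submodule ℝ (Fin (l + 2) → ℝ) :=
    LinearMap.ker (LinearMap.proj (R := ℝ) (φ := fun _ : Fin (l + 2) => ℝ) 0) ⊓
      LinearMap.ker (LinearMap.proj (R := ℝ) (φ := fun _ : Fin (l + 2) => ℝ) 1)
  have hS : ∀ x, x ∈ S ↔ x 0 = 0 ∧ x 1 = 0 := fun x => by simp [S]
  have hsingle : ∀ i : Fin l, (Pi.single i.succ.succ 1 : Fin (l + 2) → ℝ) ∈ S := by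
    intro i
    rw [hS]
    constructor
    · exact Pi.single_eq_of_ne (Fin.succ_ne_zero _).symm 1
    · refine Pi.single_eq_of_ne ?_ 1
      rw [← Fin.succ_zero_eq_one]
      exact fun h => Fin.succ_ne_zero i (Fin.succ_injective _ h).symm
  have hntan : ∀ i : Fin l, n i.succ.succ = 0 := fun i =>
    fderiv_apply_eq_zero_of_eqOn_subspace hU₀n hfd S (fun x hx hxS => by
      have := hWcΓ x hx ((hS x).mp hxS)
      rw [hΓ] at this
      exact this.2) (hsingle i)
  have hJtan : ∀ k (i : Fin l), J k i.succ.succ = 0 := by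
    intro k i
    rw [hJa, fderiv_apply_eq_zero_of_eqOn_subspace hU₀n hVd S
      (fun x hx hxS => hVWc x hx ((hS x).mp hxS)) (hsingle i)]
    rfl
  -- The spectrum of `J`.
  have hmap : J.map (fun t => (t : ℂ)) = J.map (algebraMap ℝ ℂ) := rfl
  have hroot : ∀ μ : ℝ, J.charpoly.IsRoot μ ↔
      (μ : ℂ) ^ l * ((μ : ℂ) - lam₁) * ((μ : ℂ) - lam₂) = 0 := by
    intro μ
    have h := congrArg (Polynomial.eval (μ : ℂ)) hchar
    rw [hmap, Matrix.charpoly_map, ← Complex.coe_algebraMap, Polynomial.eval_map_algebraMap,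
      Polynomial.aeval_algebraMap_apply] at h
    simp only [Complex.coe_algebraMap, Polynomial.eval_mul, Polynomial.eval_pow,
      Polynomial.eval_X, Polynomial.eval_sub, Polynomial.eval_C] at h
    rw [← h, Polynomial.IsRoot, Polynomial.coe_aeval_eq_eval, Complex.ofReal_eq_zero]
  have htrC : (J.trace : ℂ) = lam₁ + lam₂ := by
    have h1 : (J.map (fun t => (t : ℂ))).trace = (J.trace : ℂ) := by
      simp [Matrix.trace]
    rw [← h1, Matrix.trace_eq_sum_roots_charpoly, hchar, Polynomial.roots_mul,
      Polynomial.roots_mul]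
    · simp [Multiset.sum_nsmul]
    · exact mul_ne_zero (pow_ne_zero _ Polynomial.X_ne_zero) (Polynomial.X_sub_C_ne_zero _)
    · exact mul_ne_zero (mul_ne_zero (pow_ne_zero _ Polynomial.X_ne_zero)
        (Polynomial.X_sub_C_ne_zero _)) (Polynomial.X_sub_C_ne_zero _)
  obtain ⟨b, rfl⟩ : ∃ b : ℝ, lam₂ = b := ⟨J.trace - lam₁, by push_cast; rw [htrC]; ring⟩
  have htrR : J.trace = lam₁ + b := by exact_mod_cast htrC
  have hμ := (hroot _).mp (charpoly_isRoot_of_vecMul_eq hn0 hleft)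
  have htr0 : J.trace ≠ 0 := by
    intro ht
    obtain ⟨u, hu0, hu⟩ := exists_mulVec_eq_of_charpoly_isRoot
      ((hroot lam₁).mpr (by simp))
    have hsplit : ∀ k, J k 0 * u 0 + J k 1 * u 1 = lam₁ * u k := by
      intro k
      have h := congrFun hu k
      simp only [Matrix.mulVec, dotProduct, Fin.sum_univ_succ, hJtan] at h
      simpa using h
    have hlsplit : ∀ j, n 0 * J 0 j + n 1 * J 1 j = 0 := by
      intro j
      have h := congrFun hleft j
      simp only [Matrix.vecMul, dotProduct, Fin.sum_univ_succ, hntan, ht] at h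
      simpa using h
    have htr2 : J 0 0 + J 1 1 = 0 := by
      rw [Matrix.trace] at ht
      simp only [Matrix.diag_apply, Fin.sum_univ_succ, hJtan] at ht
      simpa using ht
    refine hlam₁ (eigenvalue_eq_zero_of_trace_eq_zero (hsplit 0) (hsplit 1) htr2 (hlsplit 0)
      (hlsplit 1) ?_ ?_)
    · rintro ⟨h0, h1⟩
      refine hn0 (funext fun i => ?_)
      exact Fin.cases h0 (fun i => Fin.cases h1 hntan i) i
    · rintro ⟨h0, h1⟩
      refine hu0 (funext fun i => ?_)
      have h := hsplit i
      rw [h0, h1, mul_zero, mul_zero, add_zero] at h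
      exact (mul_eq_zero.mp h.symm).resolve_left hlam₁
  have hcases : J.trace / r = lam₁ ∨ J.trace / r = b := by
    have h : (J.trace / r) ^ l * (J.trace / r - lam₁) * (J.trace / r - b) = 0 := by
      exact_mod_cast hμ
    rcases mul_eq_zero.mp h with h | h
    · exact Or.inl (sub_eq_zero.mp
        ((mul_eq_zero.mp h).resolve_left (pow_ne_zero _ (div_ne_zero htr0 hr0))))
    · exact Or.inr (sub_eq_zero.mp h)
  rw [htrR] at hcases htr0
  rw [div_eq_iff hr0, div_eq_iff hr0] at hcases
  have hb : b ≠ 0 := by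
    rintro rfl
    rcases hcases with h | h
    · refine hr1 (mul_left_cancel₀ hlam₁ ?_)
      linarith
    · exact hlam₁ (by linarith)
  refine ⟨Complex.ofReal_im b, by exact_mod_cast hb, by exact_mod_cast htr0, ?_⟩
  rcases hcases with h | h
  · left
    have : b = (r - 1) * lam₁ := by linarith
    exact_mod_cast this
  · right
    have : lam₁ = (r - 1) * b := by linarith
    exact_mod_cast this
end

section
/- Let z ∈ U be a singular point of W, i.e., W(z) = 0. Then the Jacobian matrix DW(z) of W at z has trace zero and determinant zero; consequently the multiset of complex eigenvalues of DW(z) is {λ, −λ, 0} for some λ ∈ ℂ, i.e., the spectrum of the linearization of W at z has the resonance λ₁ + λ₂ = 0. -/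
open Filter Topology

/-- Partial derivative with respect to `t` of a function on the `(t,x,p)`-space. -/
noncomputable def dT (g : ℝ × ℝ × ℝ → ℝ) (z : ℝ × ℝ × ℝ) : ℝ :=
  fderiv ℝ g z ((1 : ℝ), (0 : ℝ), (0 : ℝ))

/-- Partial derivative with respect to `x` of a function on the `(t,x,p)`-space. -/
noncomputable def dX (g : ℝ × ℝ × ℝ → ℝ) (z : ℝ × ℝ × ℝ) : ℝ :=
  fderiv ℝ g z ((0 : ℝ), (1 : ℝ), (0 : ℝ))

/-- Partial derivative with respect to `p` of a function on the `(t,x,p)`-space. -/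
noncomputable def dP (g : ℝ × ℝ × ℝ → ℝ) (z : ℝ × ℝ × ℝ) : ℝ :=
  fderiv ℝ g z ((0 : ℝ), (0 : ℝ), (1 : ℝ))

/-- The directional derivative of a function of class `C^(n+1)` is of class `C^n`. -/
lemma ContDiffAt.fderiv_apply_const {E : Type*} [NormedAddCommGroup E] [NormedSpace ℝ E]
    {g : E → ℝ} {z : E} {m n : WithTop ℕ∞} (hg : ContDiffAt ℝ n g z) (hmn : m + 1 ≤ n) (v : E) :
    ContDiffAt ℝ m (fun y => fderiv ℝ g y v) z :=
  (hg.fderiv_right hmn).clm_apply contDiffAt_const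

/-- Directional derivatives of a `C^2` function commute. -/
lemma ContDiffAt.fderiv_fderiv_apply_comm {E : Type*} [NormedAddCommGroup E] [NormedSpace ℝ E]
    {g : E → ℝ} {z : E} (hg : ContDiffAt ℝ 2 g z) (v w : E) :
    fderiv ℝ (fun y => fderiv ℝ g y v) z w = fderiv ℝ (fun y => fderiv ℝ g y w) z v := by
  have hd : DifferentiableAt ℝ (fderiv ℝ g) z :=
    (hg.fderiv_right (m := 1) (by norm_num)).differentiableAt (by norm_num)
  have hs : IsSymmSndFDerivAt ℝ g z := hg.isSymmSndFDerivAt (by simp)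
  rw [fderiv_clm_apply hd (differentiableAt_const v),
    fderiv_clm_apply hd (differentiableAt_const w)]
  simpa using hs.eq w v

/-- A complex `3 × 3` matrix with zero trace and zero determinant has eigenvalues
`0`, `lam` and `-lam`. -/
lemma Matrix.exists_charpoly_eq_of_trace_eq_zero_of_det_eq_zero (M : Matrix (Fin 3) (Fin 3) ℂ)
    (htr : M.trace = 0) (hdet : M.det = 0) :
    ∃ lam : ℂ, M.charpoly = Polynomial.X * (Polynomial.X - Polynomial.C lam) *
      (Polynomial.X + Polynomial.C lam) := by
  obtain ⟨lam, hlam⟩ := IsAlgClosed.exists_pow_nat_eq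
    (-(M 0 0 * M 1 1 - M 0 1 * M 1 0 + (M 0 0 * M 2 2 - M 0 2 * M 2 0)
      + (M 1 1 * M 2 2 - M 1 2 * M 2 1))) (n := 2) (by norm_num)
  refine ⟨lam, ?_⟩
  rw [Matrix.trace_fin_three] at htr
  rw [Matrix.det_fin_three] at hdet
  apply_fun (Polynomial.C : ℂ → Polynomial ℂ) at htr hdet hlam
  simp only [map_add, map_sub, map_mul, map_neg, map_pow, map_zero] at htr hdet hlam
  rw [Matrix.charpoly, Matrix.det_fin_three]
  simp only [Matrix.charmatrix_apply, Matrix.diagonal_apply, Fin.isValue, Fin.reduceEq,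
    if_true, if_false]
  linear_combination (-Polynomial.X ^ 2) * htr - hdet + Polynomial.X * hlam

/-- At any singular point `z` of the Euler–Lagrange field
`W = (L_pp, p·L_pp, L_x − L_tp − p·L_xp)`, the Jacobian matrix `DW(z)` has trace zero and
determinant zero; consequently its complex eigenvalues form the multiset `{λ, −λ, 0}`
for some `λ ∈ ℂ` (the resonance `λ₁ + λ₂ = 0`). -/
theorem stmt15 (U : Set (ℝ × ℝ × ℝ)) (hU : IsOpen U)
    (L : ℝ × ℝ × ℝ → ℝ) (hL : ContDiffOn ℝ 3 L U)
    (W : ℝ × ℝ × ℝ → ℝ × ℝ × ℝ)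
    (hW : W = fun z => (dP (dP L) z, z.2.2 * dP (dP L) z,
      dX L z - dT (dP L) z - z.2.2 * dX (dP L) z))
    (z : ℝ × ℝ × ℝ) (hz : z ∈ U) (hsing : W z = 0)
    (J : Matrix (Fin 3) (Fin 3) ℝ)
    (hJ : J = Matrix.of fun i j =>
      fderiv ℝ (fun y => ![(W y).1, (W y).2.1, (W y).2.2] i) z
        (![((1 : ℝ), (0 : ℝ), (0 : ℝ)), ((0 : ℝ), (1 : ℝ), (0 : ℝ)),
           ((0 : ℝ), (0 : ℝ), (1 : ℝ))] j)) :
    J.trace = 0 ∧ J.det = 0 ∧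
      ∃ lam : ℂ, (J.map (fun t => (t : ℂ))).charpoly =
        Polynomial.X * (Polynomial.X - Polynomial.C lam) *
          (Polynomial.X + Polynomial.C lam) := by
  have hLz : ContDiffAt ℝ 3 L z := hL.contDiffAt (hU.mem_nhds hz)
  have hPL : ContDiffAt ℝ 2 (dP L) z := hLz.fderiv_apply_const (by norm_num) _
  have hX : DifferentiableAt ℝ (dX L) z :=
    (hLz.fderiv_apply_const (m := 2) (by norm_num) _).differentiableAt (by norm_num)
  have hPP : DifferentiableAt ℝ (dP (dP L)) z :=
    (hPL.fderiv_apply_const (m := 1) (by norm_num) _).differentiableAt (by norm_num)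
  have hTP : DifferentiableAt ℝ (dT (dP L)) z :=
    (hPL.fderiv_apply_const (m := 1) (by norm_num) _).differentiableAt (by norm_num)
  have hXP : DifferentiableAt ℝ (dX (dP L)) z :=
    (hPL.fderiv_apply_const (m := 1) (by norm_num) _).differentiableAt (by norm_num)
  have hcommX : dP (dX L) z = dX (dP L) z :=
    (hLz.of_le (by norm_num)).fderiv_fderiv_apply_comm _ _
  have hcommXP : dP (dX (dP L)) z = dX (dP (dP L)) z := hPL.fderiv_fderiv_apply_comm _ _
  have hcommTP : dP (dT (dP L)) z = dT (dP (dP L)) z := hPL.fderiv_fderiv_apply_comm _ _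
  have hp : HasFDerivAt (fun y : ℝ × ℝ × ℝ => y.2.2)
      ((ContinuousLinearMap.snd ℝ ℝ ℝ).comp (ContinuousLinearMap.snd ℝ ℝ (ℝ × ℝ))) z :=
    ((ContinuousLinearMap.snd ℝ ℝ ℝ).comp
      (ContinuousLinearMap.snd ℝ ℝ (ℝ × ℝ))).hasFDerivAt
  have hA : dP (dP L) z = 0 := by
    rw [hW] at hsing
    exact congrArg Prod.fst hsing
  have hrow₁ : fderiv ℝ (fun y => y.2.2 * dP (dP L) y) z
      = z.2.2 • fderiv ℝ (dP (dP L)) z := by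
    rw [(hp.fun_mul hPP.hasFDerivAt).fderiv, hA, zero_smul, add_zero]
  have hrow₂ : fderiv ℝ (fun y => dX L y - dT (dP L) y - y.2.2 * dX (dP L) y) z (0, 0, 1)
      = -dT (dP (dP L)) z - z.2.2 * dX (dP (dP L)) z := by
    rw [((hX.hasFDerivAt.fun_sub hTP.hasFDerivAt).fun_sub
      (hp.fun_mul hXP.hasFDerivAt)).fderiv, ← hcommXP, ← hcommTP]
    have hx : fderiv ℝ (dX L) z (0, 0, 1) = dX (dP L) z := hcommX
    simp [hx, dP]
    ring
  have h₀ : ∀ j, J 0 j = fderiv ℝ (dP (dP L)) z (![(1, 0, 0), (0, 1, 0), (0, 0, 1)] j) := by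
    intro j
    simp [hJ, hW]
  have h₁ : ∀ j, J 1 j = z.2.2 * J 0 j := by
    intro j
    rw [h₀]
    simp [hJ, hW, hrow₁]
  have h₂ : J 2 2 = -J 0 0 - z.2.2 * J 0 1 := by
    rw [h₀, h₀, hJ, hW]
    exact hrow₂
  have htr : J.trace = 0 := by
    rw [Matrix.trace_fin_three, h₁, h₂]
    ring
  have hdet : J.det = 0 := by
    rw [Matrix.det_fin_three, h₁, h₁, h₁]
    ring
  refine ⟨htr, hdet, Matrix.exists_charpoly_eq_of_trace_eq_zero_of_det_eq_zero _ ?_ ?_⟩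
  · exact (AddMonoidHom.map_trace Complex.ofRealHom J).symm.trans (by simp [htr])
  · exact (Complex.ofRealHom.map_det J).symm.trans (by simp [hdet])
end
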